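/- arXiv:2503.04427 — 4 statements merged into one kernel-verified Lean document; each statement's English description precedes it below -/
import Mathlib

section
/- Let A ∈ ℂ^{n×n} be Hermitian positive definite with smallest eigenvalue λ_min and largest eigenvalue λ_max, let b ∈ ℂ^n with ‖b‖ = 1, let f be a Stieltjes function, and let m ≥ 1. Let V_m ∈ ℂ^{n×m} have orthonormal columns whose column space equals K_m(A,b), and let f_m := V_m f(V_m* A V_m) V_m* b be the Lanczos approximation. Then for every x ∈ K_m(A,b), ‖f(A)b − f_m‖ ≤ (1 + κ(A)²) ‖f(A)b − x‖, where κ(A) = λ_max/λ_min; in particular ‖f(A)b − f_m‖ ≤ (1 + κ(A)²) min_{x ∈ K_m(A,b)} ‖f(A)b − x‖. -/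
open MeasureTheory Matrix ComplexOrder

/-- A Stieltjes function: `f z = ∫ 1/(z+t) dμ(t)` for `z > 0`, for a positive Borel
measure `μ` on `[0,∞)` with `∫ 1/(1+t) dμ(t) < ∞`. -/
def IsStieltjes (f : ℝ → ℝ) : Prop :=
  ∃ μ : Measure ℝ,
    MeasureTheory.IntegrableOn (fun t => (1 + t)⁻¹) (Set.Ici 0) μ ∧
    ∀ z : ℝ, 0 < z → f z = ∫ t in Set.Ici (0 : ℝ), (z + t)⁻¹ ∂μ

/-- The Krylov subspace `K_m(A,b) = span{b, Ab, …, A^{m-1} b}`. -/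
noncomputable def Krylov {n : ℕ} (A : Matrix (Fin n) (Fin n) ℂ)
    (b : EuclideanSpace ℂ (Fin n)) (m : ℕ) : Submodule ℂ (EuclideanSpace ℂ (Fin n)) :=
  Submodule.span ℂ {v | ∃ i < m, v = Matrix.toEuclideanLin (A ^ i) b}

/-! Idea. A divided difference of a Stieltjes function is, up to sign, again a Stieltjes function:
`1/(z+t) - 1/(a+t) = (a-z) / ((z+t)(a+t))`, so the measure `dμ(t)` is replaced by `dμ(t)/(a+t)`.
Iterating over the eigenvalues `θ_j` of `T = V* A V` gives Newton's interpolation formula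
`f = r + p h` with `deg r < m`, `p(z) = ∏ (θ_j - z)` and `h` Stieltjes. Since `p(T) = 0`, the
Lanczos approximation to `f(A) b` is the one to `r(A) b`, which is exact, so that its error is
`h(A) w` with `w = p(A) b`; moreover `V* w = p(T) V* b = 0`, i.e. `w` is orthogonal to the Krylov
space. For `x` in the Krylov space, `d = f(A) b - x` therefore satisfies
`⟪w, h(A) w⟫ = ⟪w, d⟫ ≤ ‖w‖ ‖d‖`, while `‖w‖ ‖h(A) w‖ ≤ √κ ⟪w, h(A) w⟫` because the eigenvalues
of `h(A)` lie within a factor `κ` of each other. Hence `‖h(A) w‖ ≤ √κ ‖d‖`, and `√κ ≤ 1 + κ²`. -/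

section SignedNodal

open Polynomial

/-- The polynomial `∏ i ∈ s, (θ i - X)`, equal to `(-1) ^ #s * Lagrange.nodal s θ`. With this sign
the divided differences of a Stieltjes function are nonnegative. -/
noncomputable def signedNodal {ι R : Type*} [CommRing R] (s : Finset ι) (θ : ι → R) : R[X] :=
  ∏ i ∈ s, (C (θ i) - X)

variable {ι R : Type*} [CommRing R] {s : Finset ι} {θ : ι → R}

theorem degree_signedNodal_le : (signedNodal s θ).degree ≤ s.card := by
  calc (signedNodal s θ).degree ≤ ∑ i ∈ s, degree (C (θ i) - X : R[X]) := degree_prod_le _ _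
    _ ≤ ∑ _i ∈ s, (1 : WithBot ℕ) := by
      gcongr with i
      exact (degree_sub_le _ _).trans (max_le (degree_C_le.trans zero_le_one) degree_X_le)
    _ = s.card := by simp

theorem eval_signedNodal_eq_zero {i : ι} (hi : i ∈ s) : (signedNodal s θ).eval (θ i) = 0 := by
  rw [signedNodal, eval_prod]
  exact Finset.prod_eq_zero hi (by simp)

end SignedNodal

section Stieltjes

open scoped NNReal

theorem inv_add_le_mul_inv_add {x y t κ : ℝ} (hx : 0 < x) (hy : 0 < y) (ht : 0 ≤ t) (hκ : 1 ≤ κ)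
    (hyx : y ≤ κ * x) : (x + t)⁻¹ ≤ κ * (y + t)⁻¹ := by
  rw [inv_eq_one_div, ← div_eq_mul_inv, div_le_div_iff₀ (by positivity) (by positivity)]
  linarith [le_mul_of_one_le_left ht hκ]

theorem integrableOn_inv_add {μ : Measure ℝ}
    (hμ : IntegrableOn (fun t => (1 + t)⁻¹) (Set.Ici 0) μ) {z : ℝ} (hz : 0 < z) :
    IntegrableOn (fun t => (z + t)⁻¹) (Set.Ici 0) μ := by
  refine Integrable.mono' (hμ.const_mul (max 1 z⁻¹)) (by fun_prop) ?_
  filter_upwards [ae_restrict_mem measurableSet_Ici] with t (ht : 0 ≤ t)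
  rw [Real.norm_of_nonneg (by positivity)]
  refine inv_add_le_mul_inv_add hz one_pos ht (le_max_left _ _) ?_
  calc 1 = z⁻¹ * z := (inv_mul_cancel₀ hz.ne').symm
    _ ≤ max 1 z⁻¹ * z := by gcongr; exact le_max_right _ _

namespace IsStieltjes

variable {f : ℝ → ℝ}

theorem nonneg (hf : IsStieltjes f) {z : ℝ} (hz : 0 < z) : 0 ≤ f z := by
  obtain ⟨μ, -, hfμ⟩ := hf
  rw [hfμ z hz]
  exact setIntegral_nonneg measurableSet_Ici fun t (ht : 0 ≤ t) => by positivity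

theorem apply_le_mul_apply (hf : IsStieltjes f) {x y κ : ℝ} (hx : 0 < x) (hy : 0 < y) (hκ : 1 ≤ κ)
    (hyx : y ≤ κ * x) : f x ≤ κ * f y := by
  obtain ⟨μ, hμ, hfμ⟩ := hf
  rw [hfμ x hx, hfμ y hy, ← integral_const_mul]
  exact setIntegral_mono_on (integrableOn_inv_add hμ hx) ((integrableOn_inv_add hμ hy).const_mul κ)
    measurableSet_Ici fun t ht => inv_add_le_mul_inv_add hx hy ht hκ hyx

theorem exists_dividedDifference (hf : IsStieltjes f) {a : ℝ} (ha : 0 < a) :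
    ∃ g, IsStieltjes g ∧ ∀ z, 0 < z → f z = f a + (a - z) * g z := by
  obtain ⟨μ, hμ, hfμ⟩ := hf
  let ρ : ℝ → ℝ≥0 := fun t => (a + t)⁻¹.toNNReal
  have hρ : Measurable ρ := by fun_prop
  have hρ_smul : ∀ {t : ℝ} (y : ℝ), 0 ≤ t → ρ t • y = (a + t)⁻¹ * y := fun {t} y ht => by
    rw [NNReal.smul_def, smul_eq_mul, Real.coe_toNNReal _ (by positivity)]
  refine ⟨fun z => ∫ t in Set.Ici 0, (z + t)⁻¹ ∂μ.withDensity fun t => ρ t,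
    ⟨_, ?_, fun _ _ => rfl⟩, fun z hz => ?_⟩
  · rw [IntegrableOn, restrict_withDensity measurableSet_Ici,
      integrable_withDensity_iff_integrable_smul hρ]
    refine Integrable.mono' (hμ.const_mul a⁻¹) (by fun_prop) ?_
    filter_upwards [ae_restrict_mem measurableSet_Ici] with t (ht : 0 ≤ t)
    rw [hρ_smul _ ht, Real.norm_of_nonneg (by positivity)]
    gcongr
    exact le_add_of_nonneg_right ht
  · beta_reduce
    rw [← sub_eq_iff_eq_add', hfμ z hz, hfμ a ha,
      ← integral_sub (integrableOn_inv_add hμ hz) (integrableOn_inv_add hμ ha),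
      setIntegral_withDensity_eq_setIntegral_smul hρ _ measurableSet_Ici, ← integral_const_mul]
    refine setIntegral_congr_fun measurableSet_Ici fun t (ht : 0 ≤ t) => ?_
    rw [hρ_smul _ ht]
    field_simp
    ring

open Polynomial in
theorem exists_newton_interpolation (hf : IsStieltjes f) {ι : Type*} {s : Finset ι} {θ : ι → ℝ}
    (hθ : ∀ i ∈ s, 0 < θ i) :
    ∃ (r : ℝ[X]) (h : ℝ → ℝ), IsStieltjes h ∧ r.degree < s.card ∧
      ∀ z, 0 < z → f z = r.eval z + (signedNodal s θ).eval z * h z := by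
  classical
  induction s using Finset.induction_on with
  | empty => exact ⟨0, f, hf, by simp, fun z _ => by simp [signedNodal]⟩
  | insert i s his ih =>
    obtain ⟨r, h, hh, hr, hfr⟩ := ih fun j hj => hθ j (Finset.mem_insert_of_mem hj)
    obtain ⟨g, hg, hhg⟩ := hh.exists_dividedDifference (hθ i (Finset.mem_insert_self i s))
    refine ⟨r + C (h (θ i)) * signedNodal s θ, g, hg, ?_, fun z hz => ?_⟩
    · have hp : (C (h (θ i)) * signedNodal s θ).degree ≤ s.card := by
        simpa only [zero_add] using degree_mul_le_of_le degree_C_le degree_signedNodal_le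
      rw [Finset.card_insert_of_notMem his]
      exact ((degree_add_le _ _).trans (max_le hr.le hp)).trans_lt (mod_cast Nat.lt_succ_self _)
    · rw [hfr z hz, hhg z hz, signedNodal, signedNodal, Finset.prod_insert his]
      simp only [eval_add, eval_mul, eval_sub, eval_C, eval_X]
      ring

end IsStieltjes

end Stieltjes

section QuasiOptimality

variable {ι 𝕜 E : Type*} [Fintype ι] [RCLike 𝕜] [NormedAddCommGroup E] [InnerProductSpace 𝕜 E]
  {e w : E} {h : ι → ℝ} {κ : ℝ}

/- With `e = H w`, where `H` is diagonal in the basis `u`, this reverses the Cauchy-Schwarz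
inequality `|⟪w, H w⟫| ≤ ‖w‖ ‖H w‖`. -/
theorem sq_norm_mul_sq_norm_le_of_inner_eq_mul (u : OrthonormalBasis ι 𝕜 E) (hh : ∀ i, 0 ≤ h i)
    (hratio : ∀ i j, h i ≤ κ * h j) (he : ∀ i, inner 𝕜 (u i) e = h i * inner 𝕜 (u i) w) :
    ‖w‖ ^ 2 * ‖e‖ ^ 2 ≤ κ * ‖inner 𝕜 w e‖ ^ 2 := by
  set a : ι → ℝ := fun i => ‖inner 𝕜 (u i) w‖ ^ 2
  have hw : ‖w‖ ^ 2 = ∑ i, a i := (u.sum_sq_norm_inner_right w).symm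
  have hnorm : ‖e‖ ^ 2 = ∑ i, h i ^ 2 * a i := by
    simp_rw [← u.sum_sq_norm_inner_right e, he, norm_mul, mul_pow, RCLike.norm_ofReal, sq_abs, a]
  have hinner : inner 𝕜 w e = ((∑ i, h i * a i : ℝ) : 𝕜) := by
    rw [← u.sum_inner_mul_inner, RCLike.ofReal_sum]
    refine Finset.sum_congr rfl fun i _ => ?_
    rw [he, mul_left_comm, ← inner_conj_symm w, RCLike.conj_mul]
    simp [a]
  calc ‖w‖ ^ 2 * ‖e‖ ^ 2 = ∑ i, ∑ j, a i * (h j ^ 2 * a j) := by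
        rw [hw, hnorm, Finset.sum_mul_sum]
    _ ≤ ∑ i, ∑ j, κ * (h i * a i * (h j * a j)) := by
        refine Finset.sum_le_sum fun i _ => Finset.sum_le_sum fun j _ => ?_
        calc a i * (h j ^ 2 * a j) = h j * (h j * (a i * a j)) := by ring
          _ ≤ κ * h i * (h j * (a i * a j)) :=
            mul_le_mul_of_nonneg_right (hratio j i) (mul_nonneg (hh j) (by positivity))
          _ = κ * (h i * a i * (h j * a j)) := by ring
    _ = κ * ‖inner 𝕜 w e‖ ^ 2 := by
        simp_rw [hinner, RCLike.norm_ofReal, sq_abs, sq (∑ i, h i * a i), Finset.sum_mul_sum,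
          Finset.mul_sum]

theorem norm_le_sqrt_mul_norm_of_inner_eq_mul (u : OrthonormalBasis ι 𝕜 E) (hκ : 0 ≤ κ)
    (hh : ∀ i, 0 ≤ h i) (hratio : ∀ i j, h i ≤ κ * h j)
    (he : ∀ i, inner 𝕜 (u i) e = h i * inner 𝕜 (u i) w) {d : E} (hd : inner 𝕜 w (e - d) = 0) :
    ‖e‖ ≤ √κ * ‖d‖ := by
  rcases eq_or_ne w 0 with rfl | hw
  · have he0 : e = 0 := by rw [← u.sum_repr' e]; simp [he]
    rw [he0, norm_zero]
    positivity
  have hwd : ‖inner 𝕜 w e‖ ≤ ‖w‖ * ‖d‖ := by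
    rw [inner_sub_right, sub_eq_zero] at hd
    exact hd ▸ norm_inner_le_norm w d
  have hsq : ‖w‖ ^ 2 * ‖e‖ ^ 2 ≤ ‖w‖ ^ 2 * (κ * ‖d‖ ^ 2) := by
    calc ‖w‖ ^ 2 * ‖e‖ ^ 2 ≤ κ * ‖inner 𝕜 w e‖ ^ 2 :=
          sq_norm_mul_sq_norm_le_of_inner_eq_mul u hh hratio he
      _ ≤ κ * (‖w‖ * ‖d‖) ^ 2 := by gcongr
      _ = ‖w‖ ^ 2 * (κ * ‖d‖ ^ 2) := by ring
  calc ‖e‖ ≤ √(κ * ‖d‖ ^ 2) := Real.le_sqrt_of_sq_le (le_of_mul_le_mul_left hsq (by positivity))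
    _ = √κ * ‖d‖ := by rw [Real.sqrt_mul hκ, Real.sqrt_sq (norm_nonneg d)]

end QuasiOptimality

theorem sqrt_le_one_add_sq (x : ℝ) : √x ≤ 1 + x ^ 2 :=
  Real.sqrt_le_iff.mpr ⟨by positivity, by nlinarith [sq_nonneg (x - 1), sq_nonneg (x ^ 2)]⟩

section HermitianFunctionalCalculus

open Polynomial

variable {ι 𝕜 : Type*} [Fintype ι] [DecidableEq ι] [RCLike 𝕜] {M : Matrix ι ι 𝕜}

theorem toEuclideanLin_cfc_eigenvectorBasis (hM : M.IsHermitian) (f : ℝ → ℝ) (j : ι) :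
    toEuclideanLin (hM.cfc f) (hM.eigenvectorBasis j) =
      (f (hM.eigenvalues j) : 𝕜) • hM.eigenvectorBasis j := by
  apply WithLp.ofLp_injective 2
  rw [ofLp_toLpLin, toLin'_apply, IsHermitian.cfc, Unitary.conjStarAlgAut_apply,
    ← mulVec_mulVec, ← mulVec_mulVec, hM.star_eigenvectorUnitary_mulVec, diagonal_mulVec_single,
    ← smul_eq_mul, Pi.single_smul', mulVec_smul, hM.eigenvectorUnitary_mulVec]
  rfl

theorem inner_eigenvectorBasis_toEuclideanLin_cfc (hM : M.IsHermitian) (f : ℝ → ℝ) (i : ι)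
    (v : EuclideanSpace 𝕜 ι) :
    inner 𝕜 (hM.eigenvectorBasis i) (toEuclideanLin (hM.cfc f) v) =
      f (hM.eigenvalues i) * inner 𝕜 (hM.eigenvectorBasis i) v := by
  conv_lhs => rw [← hM.eigenvectorBasis.sum_repr' v]
  simp only [map_sum, map_smul, toEuclideanLin_cfc_eigenvectorBasis, inner_sum, inner_smul_right,
    hM.eigenvectorBasis.inner_eq_ite]
  simp [mul_comm]

theorem cfc_congr_eigenvalues (hM : M.IsHermitian) {f g : ℝ → ℝ}
    (h : ∀ j, f (hM.eigenvalues j) = g (hM.eigenvalues j)) : hM.cfc f = hM.cfc g := by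
  rw [IsHermitian.cfc, IsHermitian.cfc, show f ∘ hM.eigenvalues = g ∘ hM.eigenvalues from funext h]

theorem cfc_eval_eq_aeval (hM : M.IsHermitian) (p : ℝ[X]) :
    hM.cfc (fun z => p.eval z) = aeval M p := by
  rw [← hM.cfc_eq, cfc_polynomial p M hM.isSelfAdjoint]

theorem aeval_signedNodal_eigenvalues (hM : M.IsHermitian) :
    aeval M (signedNodal Finset.univ hM.eigenvalues) = 0 := by
  rw [← cfc_eval_eq_aeval hM, cfc_congr_eigenvalues hM (g := fun _ => 0) fun j =>
    eval_signedNodal_eq_zero (Finset.mem_univ j), ← hM.cfc_eq, cfc_const_zero]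

theorem toEuclideanLin_aeval_apply (p : ℝ[X]) (v : EuclideanSpace 𝕜 ι) :
    toEuclideanLin (aeval M p) v = p.sum fun i a => (a : 𝕜) • toEuclideanLin (M ^ i) v := by
  simp_rw [aeval_def, eval₂_eq_sum, Polynomial.sum, map_sum, LinearMap.sum_apply,
    ← Algebra.smul_def]
  refine Finset.sum_congr rfl fun i _ => ?_
  rw [RCLike.real_smul_eq_coe_smul (K := 𝕜), map_smul, LinearMap.smul_apply]

end HermitianFunctionalCalculus

section Lanczos

open Polynomial

variable {n k 𝕜 : Type*} [Fintype n] [DecidableEq n] [Fintype k] [DecidableEq k] [RCLike 𝕜]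
  {A : Matrix n n 𝕜} {b : EuclideanSpace 𝕜 n} {V : Matrix n k 𝕜}

/-- The Lanczos approximation `V f(V* A V) V* b` to `f(A) b`. The columns of `V` are meant to form
an orthonormal basis of a Krylov space of `A` and `b`. -/
noncomputable def lanczosApprox (hA : A.IsHermitian) (V : Matrix n k 𝕜) (f : ℝ → ℝ)
    (b : EuclideanSpace 𝕜 n) : EuclideanSpace 𝕜 n :=
  toEuclideanLin V (toEuclideanLin ((isHermitian_conjTranspose_mul_mul V hA).cfc f)
    (toEuclideanLin Vᴴ b))

/-- The Ritz values of `A`, i.e. the eigenvalues of the compression `V* A V`. -/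
noncomputable abbrev ritzValue (hA : A.IsHermitian) (V : Matrix n k 𝕜) : k → ℝ :=
  (isHermitian_conjTranspose_mul_mul V hA).eigenvalues

theorem ritzValue_pos (hA : A.IsHermitian) (hpos : ∀ i, 0 < hA.eigenvalues i) (hV : Vᴴ * V = 1)
    (j : k) : 0 < ritzValue hA V j := by
  have hVinj : Function.LeftInverse Vᴴ.mulVec V.mulVec := fun y => by simp [hV]
  exact ((hA.posDef_iff_eigenvalues_pos.mpr hpos).conjTranspose_mul_mul_same
    hVinj.injective).eigenvalues_pos j

theorem toEuclideanLin_mul_conjTranspose_of_mem_range (hV : Vᴴ * V = 1)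
    {v : EuclideanSpace 𝕜 n} (hv : v ∈ LinearMap.range (toEuclideanLin V)) :
    toEuclideanLin V (toEuclideanLin Vᴴ v) = v := by
  obtain ⟨y, rfl⟩ := hv
  rw [← LinearMap.comp_apply (toEuclideanLin Vᴴ), ← toLpLin_mul_same, hV, toLpLin_one,
    LinearMap.id_apply]

theorem conjTranspose_pow_apply (hV : Vᴴ * V = 1) {m : ℕ}
    (hK : ∀ i < m, toEuclideanLin (A ^ i) b ∈ LinearMap.range (toEuclideanLin V)) {i : ℕ}
    (hi : i ≤ m) :
    toEuclideanLin Vᴴ (toEuclideanLin (A ^ i) b) =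
      toEuclideanLin ((Vᴴ * A * V) ^ i) (toEuclideanLin Vᴴ b) := by
  induction i with
  | zero => simp
  | succ i ih =>
    rw [pow_succ' (Vᴴ * A * V), toLpLin_mul_same, LinearMap.comp_apply, ← ih (Nat.le_of_succ_le hi),
      toLpLin_mul_same, toLpLin_mul_same, LinearMap.comp_apply, LinearMap.comp_apply,
      toEuclideanLin_mul_conjTranspose_of_mem_range hV (hK i hi), pow_succ', toLpLin_mul_same,
      LinearMap.comp_apply]

theorem conjTranspose_aeval_apply (hV : Vᴴ * V = 1) {m : ℕ}
    (hK : ∀ i < m, toEuclideanLin (A ^ i) b ∈ LinearMap.range (toEuclideanLin V)) {p : ℝ[X]}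
    (hp : p.degree ≤ m) :
    toEuclideanLin Vᴴ (toEuclideanLin (aeval A p) b) =
      toEuclideanLin (aeval (Vᴴ * A * V) p) (toEuclideanLin Vᴴ b) := by
  simp_rw [toEuclideanLin_aeval_apply, Polynomial.sum, map_sum, map_smul]
  refine Finset.sum_congr rfl fun i hi => ?_
  rw [conjTranspose_pow_apply hV hK (Nat.cast_le.mp ((le_degree_of_mem_supp i hi).trans hp))]

theorem toEuclideanLin_aeval_mem {K : Submodule 𝕜 (EuclideanSpace 𝕜 n)} {m : ℕ}
    (hK : ∀ i < m, toEuclideanLin (A ^ i) b ∈ K) {p : ℝ[X]} (hp : p.degree < m) :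
    toEuclideanLin (aeval A p) b ∈ K := by
  rw [toEuclideanLin_aeval_apply]
  exact Submodule.sum_mem _ fun i hi => Submodule.smul_mem _ _
    (hK i (Nat.cast_lt.mp ((le_degree_of_mem_supp i hi).trans_lt hp)))

theorem lanczosApprox_congr (hA : A.IsHermitian) {f g : ℝ → ℝ}
    (h : ∀ j, f (ritzValue hA V j) = g (ritzValue hA V j)) :
    lanczosApprox hA V f b = lanczosApprox hA V g b := by
  rw [lanczosApprox, cfc_congr_eigenvalues _ h, lanczosApprox]

theorem lanczosApprox_eval (hA : A.IsHermitian) (hV : Vᴴ * V = 1) {m : ℕ}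
    (hK : ∀ i < m, toEuclideanLin (A ^ i) b ∈ LinearMap.range (toEuclideanLin V)) {p : ℝ[X]}
    (hp : p.degree < m) :
    lanczosApprox hA V (fun z => p.eval z) b = toEuclideanLin (aeval A p) b := by
  rw [lanczosApprox, cfc_eval_eq_aeval, ← conjTranspose_aeval_apply hV hK hp.le,
    toEuclideanLin_mul_conjTranspose_of_mem_range hV (toEuclideanLin_aeval_mem hK hp)]

theorem lanczosApprox_mem_range (hA : A.IsHermitian) (f : ℝ → ℝ) :
    lanczosApprox hA V f b ∈ LinearMap.range (toEuclideanLin V) :=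
  LinearMap.mem_range_self _ _

theorem exists_isStieltjes_sub_lanczosApprox_eq (hA : A.IsHermitian)
    (hpos : ∀ i, 0 < hA.eigenvalues i) {f : ℝ → ℝ} (hf : IsStieltjes f) (hV : Vᴴ * V = 1)
    (hK : ∀ i < Fintype.card k, toEuclideanLin (A ^ i) b ∈ LinearMap.range (toEuclideanLin V)) :
    ∃ h, IsStieltjes h ∧ toEuclideanLin (hA.cfc f) b - lanczosApprox hA V f b =
        toEuclideanLin (hA.cfc h)
          (toEuclideanLin (aeval A (signedNodal .univ (ritzValue hA V))) b) := by
  have hθ : ∀ j, 0 < ritzValue hA V j := ritzValue_pos hA hpos hV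
  obtain ⟨r, h, hh, hr, hfr⟩ := hf.exists_newton_interpolation (s := .univ) fun j _ => hθ j
  have hexact : lanczosApprox hA V f b = toEuclideanLin (aeval A r) b := by
    rw [← lanczosApprox_eval hA hV hK hr]
    refine lanczosApprox_congr hA fun j => ?_
    rw [hfr _ (hθ j), eval_signedNodal_eq_zero (Finset.mem_univ j), zero_mul, add_zero]
  refine ⟨h, hh, hA.eigenvectorBasis.repr.injective (PiLp.ext fun i => ?_)⟩
  rw [OrthonormalBasis.repr_apply_apply, OrthonormalBasis.repr_apply_apply, hexact, inner_sub_right,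
    ← cfc_eval_eq_aeval hA, ← cfc_eval_eq_aeval hA]
  simp only [inner_eigenvectorBasis_toEuclideanLin_cfc, hfr _ (hpos i)]
  push_cast
  ring

theorem inner_aeval_signedNodal_eq_zero (hA : A.IsHermitian) (hV : Vᴴ * V = 1)
    (hK : ∀ i < Fintype.card k, toEuclideanLin (A ^ i) b ∈ LinearMap.range (toEuclideanLin V))
    {v : EuclideanSpace 𝕜 n} (hv : v ∈ LinearMap.range (toEuclideanLin V)) :
    inner 𝕜 (toEuclideanLin (aeval A (signedNodal .univ (ritzValue hA V))) b) v = 0 := by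
  obtain ⟨y, rfl⟩ := hv
  rw [← LinearMap.adjoint_inner_left, ← toEuclideanLin_conjTranspose_eq_adjoint,
    conjTranspose_aeval_apply hV hK degree_signedNodal_le, aeval_signedNodal_eigenvalues, map_zero,
    LinearMap.zero_apply, inner_zero_left]

theorem lanczos_near_instance_optimality_stieltjes_general (hA : A.IsHermitian) {l u : ℝ}
    (hl : 0 < l) (hspec : ∀ i, hA.eigenvalues i ∈ Set.Icc l u) {f : ℝ → ℝ} (hf : IsStieltjes f)
    (hV : Vᴴ * V = 1)
    (hK : ∀ i < Fintype.card k, toEuclideanLin (A ^ i) b ∈ LinearMap.range (toEuclideanLin V))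
    {x : EuclideanSpace 𝕜 n} (hx : x ∈ LinearMap.range (toEuclideanLin V)) :
    ‖toEuclideanLin (hA.cfc f) b - lanczosApprox hA V f b‖ ≤
      √(u / l) * ‖toEuclideanLin (hA.cfc f) b - x‖ := by
  rcases isEmpty_or_nonempty n with _ | ⟨⟨i₀⟩⟩
  · rw [Subsingleton.elim (_ - lanczosApprox hA V f b) 0, norm_zero]
    positivity
  have hpos : ∀ i, 0 < hA.eigenvalues i := fun i => hl.trans_le (hspec i).1
  have hκ : 1 ≤ u / l := (one_le_div hl).mpr ((hspec i₀).1.trans (hspec i₀).2)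
  have hle : ∀ i j, hA.eigenvalues j ≤ u / l * hA.eigenvalues i := fun i j =>
    calc hA.eigenvalues j ≤ u := (hspec j).2
      _ = u / l * l := (div_mul_cancel₀ u hl.ne').symm
      _ ≤ u / l * hA.eigenvalues i := by gcongr; exact (hspec i).1
  obtain ⟨h, hh, herr⟩ := exists_isStieltjes_sub_lanczosApprox_eq hA hpos hf hV hK
  refine norm_le_sqrt_mul_norm_of_inner_eq_mul hA.eigenvectorBasis (zero_le_one.trans hκ)
    (fun i => hh.nonneg (hpos i))
    (fun i j => hh.apply_le_mul_apply (hpos i) (hpos j) hκ (hle i j))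
    (fun i => by rw [herr]; exact inner_eigenvectorBasis_toEuclideanLin_cfc hA h i _) ?_
  rw [sub_sub_sub_cancel_left]
  exact inner_aeval_signedNodal_eq_zero hA hV hK
    (Submodule.sub_mem _ hx (lanczosApprox_mem_range hA f))

end Lanczos

/-- **Near instance optimality of Lanczos for Stieltjes functions**
(Theorem 3.1, bound (3.2)): if `A` is Hermitian positive definite, `‖b‖ = 1`, `f` is a
Stieltjes function and `V` has orthonormal columns spanning `K_m(A,b)`, then the Lanczos
approximation `f_m = V f(V* A V) V* b` satisfies
`‖f(A)b − f_m‖ ≤ (1 + κ(A)²) ‖f(A)b − x‖` for every `x ∈ K_m(A,b)`. -/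
theorem lanczos_near_instance_optimality_stieltjes
    {n m : ℕ} (hm : 1 ≤ m)
    (A : Matrix (Fin n) (Fin n) ℂ) (hA : A.IsHermitian) (hApd : A.PosDef)
    (lmin lmax : ℝ)
    (hlmin_mem : ∃ i, hA.eigenvalues i = lmin) (hlmin : ∀ i, lmin ≤ hA.eigenvalues i)
    (hlmax_mem : ∃ i, hA.eigenvalues i = lmax) (hlmax : ∀ i, hA.eigenvalues i ≤ lmax)
    (b : EuclideanSpace ℂ (Fin n)) (hb : ‖b‖ = 1)
    (f : ℝ → ℝ) (hf : IsStieltjes f)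
    (V : Matrix (Fin n) (Fin m) ℂ)
    (hVorth : Vᴴ * V = 1)
    (hVspan : LinearMap.range (Matrix.toEuclideanLin V) = Krylov A b m)
    (fm : EuclideanSpace ℂ (Fin n))
    (hfm : fm = Matrix.toEuclideanLin V
      (Matrix.toEuclideanLin ((Matrix.isHermitian_conjTranspose_mul_mul V hA).cfc f)
        (Matrix.toEuclideanLin Vᴴ b)))
    (x : EuclideanSpace ℂ (Fin n)) (hx : x ∈ Krylov A b m) :
    ‖Matrix.toEuclideanLin (hA.cfc f) b - fm‖ ≤
      (1 + (lmax / lmin) ^ 2) * ‖Matrix.toEuclideanLin (hA.cfc f) b - x‖ := by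
  subst hfm
  have hlmin0 : 0 < lmin := hlmin_mem.elim fun i hi => hi ▸ hApd.eigenvalues_pos i
  refine (lanczos_near_instance_optimality_stieltjes_general hA hlmin0
    (fun i => ⟨hlmin i, hlmax i⟩) hf hVorth (fun i hi => hVspan ▸ Submodule.subset_span
      ⟨i, by simpa using hi, rfl⟩) (hVspan ▸ hx)).trans ?_
  gcongr
  exact sqrt_le_one_add_sq _
end

section
/- Let A ∈ ℂ^{n×n} be Hermitian positive definite with smallest eigenvalue λ_min and largest eigenvalue λ_max, let b ∈ ℂ^n with ‖b‖ = 1, let f be a Stieltjes function, and let m ≥ 1. Let V_m = [v_1 | … | v_m] ∈ ℂ^{n×m} be a Lanczos basis for K_m(A,b), set β_{m+1} := ‖A v_m − V_m (V_m* A V_m) e_m^{(m)}‖, and let f_m := V_m f(V_m* A V_m) V_m* b. Then for every x ∈ K_m(A,b), ‖f(A)b − f_m‖ ≤ (1 + β_{m+1} λ_max/λ_min²) ‖f(A)b − x‖. -/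
open MeasureTheory Matrix ComplexOrder

/-!
Let `T = V* A V` and let `E = A V - V T` be the residual of the compression, so that `E* V = 0`.
For `t ≥ 0` the resolvents satisfy
`V* (A + t)⁻¹ V - (T + t)⁻¹ = -(T + t)⁻¹ E* (A + t)⁻¹ V`, and `‖(T + t)⁻¹‖ ≤ 1 / λ_min`, so
integrating against the Stieltjes measure bounds `‖V* f(A) b - f(T) V* b‖` by
`(1 / λ_min) ∫ ‖E* (A + t)⁻¹ b‖ dμ(t)`.

The key point is that the norm can be pulled out of this integral. Only the last column `r` of `E`
is nonzero, and `E* (A + t)⁻¹ V = -E* (A + t)⁻¹ E (T + t)⁻¹`, so the last entry of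
`E* (A + t)⁻¹ b` is `-⟨r, (A + t)⁻¹ r⟩` times the bottom left entry of `(T + t)⁻¹`. As `T` is upper
Hessenberg, the corresponding entry of the adjugate of `T + t` is, up to sign, the product of the
subdiagonal entries of `T`, which does not involve `t`. All the vectors `E* (A + t)⁻¹ b` therefore
lie on one ray, and the integral of their norms is
`‖E* f(A) b‖ = ‖E* (f(A) b - x)‖ ≤ β_{m+1} ‖f(A) b - x‖` for every `x` in the range of `V`.
-/

section Stieltjes

open scoped Ring

variable {f : ℝ → ℝ} {μ : Measure ℝ} {c : ℝ}

theorem integrableOn_inv_add_of_pos (hμ : IntegrableOn (fun t => (1 + t)⁻¹) (Set.Ici 0) μ)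
    (hc : 0 < c) : IntegrableOn (fun t => (c + t)⁻¹) (Set.Ici 0) μ := by
  refine (hμ.const_mul (1 + c⁻¹)).mono' (by fun_prop) ?_
  filter_upwards [ae_restrict_mem measurableSet_Ici] with t (ht : 0 ≤ t)
  have h : 1 + t ≤ (1 + c⁻¹) * (c + t) := by
    have : (1 + c⁻¹) * (c + t) = 1 + t + (c + c⁻¹ * t) := by field_simp; ring
    rw [this]
    exact le_add_of_nonneg_right (by positivity)
  rwa [Real.norm_of_nonneg (by positivity), ← div_eq_mul_inv, le_div_iff₀ (by positivity),
    inv_mul_le_iff₀ (by positivity), mul_comm]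

variable {𝓐 : Type*} [NormedRing 𝓐] [StarRing 𝓐] [NormedAlgebra ℝ 𝓐] {a : 𝓐}

theorem cfc_inv_add_const [ContinuousFunctionalCalculus ℝ 𝓐 IsSelfAdjoint]
    (ha : IsSelfAdjoint a) {t : ℝ} (h : ∀ z ∈ spectrum ℝ a, z + t ≠ 0) :
    cfc (fun z => (z + t)⁻¹) a = (a + algebraMap ℝ 𝓐 t)⁻¹ʳ := by
  rw [cfc_inv (fun z => z + t) a h, cfc_add_const t (fun z => z) a, cfc_id' ℝ a]

theorem norm_ringInverse_add_algebraMap_le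
    [IsometricContinuousFunctionalCalculus ℝ 𝓐 IsSelfAdjoint] (ha : IsSelfAdjoint a)
    (hc : 0 < c) (hca : ∀ z ∈ spectrum ℝ a, c ≤ z) {t : ℝ} (ht : 0 ≤ t) :
    ‖(a + algebraMap ℝ 𝓐 t)⁻¹ʳ‖ ≤ c⁻¹ := by
  have hle : ∀ z ∈ spectrum ℝ a, c ≤ z + t := fun z hz => le_add_of_le_of_nonneg (hca z hz) ht
  rw [← cfc_inv_add_const ha fun z hz => (hc.trans_le (hle z hz)).ne']
  refine norm_cfc_le (inv_nonneg.2 hc.le) fun z hz => ?_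
  rw [norm_inv, Real.norm_of_nonneg (hc.le.trans (hle z hz))]
  exact inv_anti₀ hc (hle z hz)

theorem integrableOn_and_cfc_eq_integral_of_stieltjes [CompleteSpace 𝓐]
    [ContinuousFunctionalCalculus ℝ 𝓐 IsSelfAdjoint] (ha : IsSelfAdjoint a)
    (hc : 0 < c) (hca : ∀ z ∈ spectrum ℝ a, c ≤ z)
    (hμ : IntegrableOn (fun t => (1 + t)⁻¹) (Set.Ici 0) μ)
    (hf : ∀ z : ℝ, 0 < z → f z = ∫ t in Set.Ici (0 : ℝ), (z + t)⁻¹ ∂μ) :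
    IntegrableOn (fun t => (a + algebraMap ℝ 𝓐 t)⁻¹ʳ) (Set.Ici 0) μ ∧
      cfc f a = ∫ t in Set.Ici (0 : ℝ), (a + algebraMap ℝ 𝓐 t)⁻¹ʳ ∂μ := by
  have hpos : ∀ t ∈ Set.Ici (0 : ℝ), ∀ z ∈ spectrum ℝ a, 0 < z + t := fun t ht z hz =>
    add_pos_of_pos_of_nonneg (hc.trans_le (hca z hz)) ht
  have hres : ∀ t ∈ Set.Ici (0 : ℝ), cfc (fun z => (z + t)⁻¹) a = (a + algebraMap ℝ 𝓐 t)⁻¹ʳ :=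
    fun t ht => cfc_inv_add_const ha fun z hz => (hpos t ht z hz).ne'
  have hcont : ContinuousOn (Function.uncurry fun t z : ℝ => (z + t)⁻¹)
      (Set.Ici 0 ×ˢ spectrum ℝ a) :=
    ContinuousOn.inv₀ (by fun_prop) fun p hp => (hpos p.1 hp.1 p.2 hp.2).ne'
  have hbound : ∀ᵐ t ∂μ.restrict (Set.Ici 0), ∀ z ∈ spectrum ℝ a, ‖(z + t)⁻¹‖ ≤ (c + t)⁻¹ := by
    filter_upwards [ae_restrict_mem measurableSet_Ici] with t (ht : 0 ≤ t) z hz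
    rw [norm_inv, Real.norm_of_nonneg (hpos t ht z hz).le]
    gcongr
    exact hca z hz
  have hint := (integrableOn_inv_add_of_pos hμ hc).hasFiniteIntegral
  refine ⟨(integrableOn_cfc measurableSet_Ici _ _ a hcont hbound hint).congr_fun hres
    measurableSet_Ici, ?_⟩
  calc cfc f a = cfc (fun z => ∫ t in Set.Ici (0 : ℝ), (z + t)⁻¹ ∂μ) a :=
        cfc_congr fun z hz => hf z (hc.trans_le (hca z hz))
    _ = ∫ t in Set.Ici (0 : ℝ), cfc (fun z => (z + t)⁻¹) a ∂μ :=
        cfc_setIntegral measurableSet_Ici _ _ a hcont hbound hint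
    _ = ∫ t in Set.Ici (0 : ℝ), (a + algebraMap ℝ 𝓐 t)⁻¹ʳ ∂μ :=
        setIntegral_congr_fun measurableSet_Ici hres

end Stieltjes

theorem norm_integral_eq_integral_norm_of_forall_mem_ray {α E : Type*} [MeasurableSpace α]
    {ν : Measure α} [NormedAddCommGroup E] [NormedSpace ℝ E] [CompleteSpace E] {g : α → E} {v : E}
    (hg : ∀ᵐ t ∂ν, ∃ s : ℝ, 0 ≤ s ∧ g t = s • v) : ‖∫ t, g t ∂ν‖ = ∫ t, ‖g t‖ ∂ν := by
  have hscale : ∀ᵐ t ∂ν, g t = ‖g t‖ • (‖v‖⁻¹ • v) := by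
    filter_upwards [hg] with t ⟨s, hs, hst⟩
    rcases eq_or_ne v 0 with rfl | hv
    · simp only [hst, smul_zero]
    · rw [hst, norm_smul, Real.norm_of_nonneg hs, smul_smul,
        mul_inv_cancel_right₀ (norm_ne_zero_iff.2 hv)]
  have hnorm : ∀ᵐ t ∂ν, ‖g t‖ = ‖g t‖ * ‖‖v‖⁻¹ • v‖ := by
    filter_upwards [hscale] with t ht
    conv_lhs => rw [ht, norm_smul, norm_norm]
  rw [integral_congr_ae hscale, integral_smul_const, norm_smul,
    Real.norm_of_nonneg (integral_nonneg fun _ => norm_nonneg _), ← integral_mul_const]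
  exact (integral_congr_ae hnorm).symm

section EuclideanLin

variable {𝕜 ι κ o : Type*} [RCLike 𝕜] [Fintype ι] [Fintype κ] [DecidableEq κ] {V : Matrix ι κ 𝕜}

theorem toEuclideanLin_single_apply (M : Matrix o κ 𝕜) (i : o) (k : κ) :
    toEuclideanLin M (EuclideanSpace.single k 1) i = M i k := by
  simp

theorem toEuclideanLin_mul_apply [DecidableEq ι] (M : Matrix o ι 𝕜) (N : Matrix ι κ 𝕜)
    (x : EuclideanSpace 𝕜 κ) :
    toEuclideanLin (M * N) x = toEuclideanLin M (toEuclideanLin N x) := by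
  rw [← LinearMap.comp_apply, ← toLpLin_mul_same]

theorem inner_toEuclideanLin_left [DecidableEq ι] (M : Matrix ι κ 𝕜) (x : EuclideanSpace 𝕜 κ)
    (y : EuclideanSpace 𝕜 ι) :
    inner 𝕜 (toEuclideanLin M x) y = inner 𝕜 x (toEuclideanLin Mᴴ y) := by
  rw [toEuclideanLin_conjTranspose_eq_adjoint, LinearMap.adjoint_inner_right]

theorem toEuclideanLin_conjTranspose_apply_of_isometry [DecidableEq ι] (hV : Vᴴ * V = 1)
    (y : EuclideanSpace 𝕜 κ) : toEuclideanLin Vᴴ (toEuclideanLin V y) = y := by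
  rw [← toEuclideanLin_mul_apply, hV, toLpLin_one, LinearMap.id_apply]

theorem norm_toEuclideanLin_of_isometry (hV : Vᴴ * V = 1) (y : EuclideanSpace 𝕜 κ) :
    ‖toEuclideanLin V y‖ = ‖y‖ := by
  classical
  rw [@norm_eq_sqrt_re_inner 𝕜, inner_toEuclideanLin_left,
    toEuclideanLin_conjTranspose_apply_of_isometry hV, ← norm_eq_sqrt_re_inner]

variable [DecidableEq ι]

theorem norm_sub_projection_le (hV : Vᴴ * V = 1) (y : EuclideanSpace 𝕜 ι)
    (z : EuclideanSpace 𝕜 κ) :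
    ‖y - toEuclideanLin V (toEuclideanLin Vᴴ y)‖ ≤ ‖y - toEuclideanLin V z‖ := by
  set p := toEuclideanLin V (toEuclideanLin Vᴴ y)
  have horth : inner 𝕜 (toEuclideanLin V (toEuclideanLin Vᴴ y - z)) (y - p) = 0 := by
    rw [inner_toEuclideanLin_left, map_sub, toEuclideanLin_conjTranspose_apply_of_isometry hV,
      sub_self, inner_zero_right]
  have hpyth := norm_add_sq_eq_norm_sq_add_norm_sq_of_inner_eq_zero _ _ horth
  rw [map_sub, sub_add_sub_cancel'] at hpyth
  exact (mul_self_le_mul_self_iff (norm_nonneg _) (norm_nonneg _)).2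
    (hpyth ▸ le_add_of_nonneg_left (mul_self_nonneg _))

theorem toEuclideanLin_conjTranspose_eq_single {M : Matrix ι κ 𝕜} {l : κ}
    (hM : ∀ i, ∀ k ≠ l, M i k = 0) (y : EuclideanSpace 𝕜 ι) :
    toEuclideanLin Mᴴ y =
      EuclideanSpace.single l (inner 𝕜 (toEuclideanLin M (EuclideanSpace.single l 1)) y) := by
  ext k
  have hk : toEuclideanLin Mᴴ y k =
      inner 𝕜 (toEuclideanLin M (EuclideanSpace.single k 1)) y := by
    rw [inner_toEuclideanLin_left, EuclideanSpace.inner_single_left, map_one, one_mul]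
  rcases eq_or_ne k l with rfl | hkl
  · rw [hk, PiLp.single_eq_same]
  · have hcol : toEuclideanLin M (EuclideanSpace.single k 1) = 0 := by
      ext i
      rw [toEuclideanLin_single_apply, hM i k hkl, PiLp.zero_apply]
    rw [hk, hcol, inner_zero_left, PiLp.single_eq_of_ne 2 hkl]

theorem norm_toEuclideanLin_conjTranspose_le {M : Matrix ι κ 𝕜} {l : κ}
    (hM : ∀ i, ∀ k ≠ l, M i k = 0) (y : EuclideanSpace 𝕜 ι) :
    ‖toEuclideanLin Mᴴ y‖ ≤ ‖toEuclideanLin M (EuclideanSpace.single l 1)‖ * ‖y‖ := by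
  rw [toEuclideanLin_conjTranspose_eq_single hM, PiLp.norm_single]
  exact norm_inner_le_norm _ _

end EuclideanLin

section HermitianMatrix

open scoped MatrixOrder

variable {ι : Type*} [DecidableEq ι] {H : Matrix ι ι ℂ} {c : ℝ}

theorem posDef_add_smul_one_of_smul_one_le (hc : 0 < c) (hcH : c • 1 ≤ H) {t : ℝ} (ht : 0 ≤ t) :
    (H + t • 1).PosDef := by
  have h : H + t • 1 = (c + t) • 1 + (H - c • 1) := by module
  rw [h]
  exact (PosDef.one.smul (by positivity)).add_posSemidef (Matrix.le_iff.1 hcH)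

variable [Fintype ι]

theorem smul_one_le_iff_forall_le_spectrum (hH : H.IsHermitian) :
    c • 1 ≤ H ↔ ∀ z ∈ spectrum ℝ H, c ≤ z := by
  open scoped Matrix.Norms.L2Operator in
  rw [← algebraMap_le_iff_le_spectrum (a := H) hH, Algebra.algebraMap_eq_smul_one]

theorem smul_one_le_iff_forall_le_eigenvalues (hH : H.IsHermitian) :
    c • 1 ≤ H ↔ ∀ i, c ≤ hH.eigenvalues i := by
  rw [smul_one_le_iff_forall_le_spectrum hH, hH.spectrum_real_eq_range_eigenvalues,
    Set.forall_mem_range]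

open scoped Matrix.Norms.L2Operator in
theorem norm_inv_add_smul_one_apply_le (hH : H.IsHermitian) (hc : 0 < c) (hcH : c • 1 ≤ H)
    {t : ℝ} (ht : 0 ≤ t) (w : EuclideanSpace ℂ ι) :
    ‖toEuclideanLin (H + t • 1)⁻¹ w‖ ≤ c⁻¹ * ‖w‖ := by
  have h := norm_ringInverse_add_algebraMap_le (a := H) hH hc
    ((smul_one_le_iff_forall_le_spectrum hH).1 hcH) ht
  rw [Algebra.algebraMap_eq_smul_one, ← nonsing_inv_eq_ringInverse] at h
  exact (l2_opNorm_mulVec _ w).trans (by gcongr)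

open scoped Matrix.Norms.L2Operator in
theorem integrableOn_and_cfc_apply_eq_integral_of_stieltjes {f : ℝ → ℝ} {μ : Measure ℝ}
    (hH : H.IsHermitian) (hc : 0 < c) (hcH : c • 1 ≤ H)
    (hμ : IntegrableOn (fun t => (1 + t)⁻¹) (Set.Ici 0) μ)
    (hf : ∀ z : ℝ, 0 < z → f z = ∫ t in Set.Ici (0 : ℝ), (z + t)⁻¹ ∂μ)
    (w : EuclideanSpace ℂ ι) :
    IntegrableOn (fun t : ℝ => (toEuclideanLin (H + t • 1)⁻¹ w : EuclideanSpace ℂ ι))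
        (Set.Ici 0) μ ∧
      toEuclideanLin (hH.cfc f) w =
        ∫ t in Set.Ici (0 : ℝ), toEuclideanLin (H + t • 1)⁻¹ w ∂μ := by
  obtain ⟨hint, heq⟩ := integrableOn_and_cfc_eq_integral_of_stieltjes
    (a := H) hH hc ((smul_one_le_iff_forall_le_spectrum hH).1 hcH) hμ hf
  simp only [Algebra.algebraMap_eq_smul_one, ← nonsing_inv_eq_ringInverse] at hint heq
  let evalAt : Matrix ι ι ℂ →L[ℂ] EuclideanSpace ℂ ι :=
    LinearMap.toContinuousLinearMap (toEuclideanLin.toLinearMap.flip w)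
  refine ⟨evalAt.integrable_comp hint, ?_⟩
  rw [← hH.cfc_eq, heq]
  exact (evalAt.integral_comp_comm hint).symm

end HermitianMatrix

section Compression

variable {R ι κ : Type*} [Ring R] [StarRing R] [Fintype ι] {A : Matrix ι ι R} {V : Matrix ι κ R}

/-- The residual `A V - V (V* A V)` of the compression of `A` to the span of the columns of `V`.
For a Lanczos basis its only nonzero column is the last one, of norm `β_{m+1}`. -/
def compressionResidual [Fintype κ] (A : Matrix ι ι R) (V : Matrix ι κ R) : Matrix ι κ R :=
  A * V - V * (Vᴴ * A * V)

variable [DecidableEq κ]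

theorem conjTranspose_compressionResidual_mul [Fintype κ] (hV : Vᴴ * V = 1) :
    (compressionResidual A V)ᴴ * V = 0 := by
  simp only [compressionResidual, conjTranspose_sub, conjTranspose_mul, conjTranspose_conjTranspose,
    Matrix.sub_mul, Matrix.mul_assoc, hV, Matrix.mul_one, sub_self]

variable [DecidableEq ι] {S : Type*} [CommSemiring S] [Algebra S R]

theorem compression_add_smul_one (hV : Vᴴ * V = 1) (t : S) :
    Vᴴ * (A + t • 1) * V = Vᴴ * A * V + t • 1 := by
  rw [Matrix.mul_add, Matrix.add_mul, Matrix.mul_smul, Matrix.mul_one, Matrix.smul_mul, hV]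

theorem compressionResidual_add_smul_one [Fintype κ] (hV : Vᴴ * V = 1) (t : S) :
    compressionResidual (A + t • 1) V = compressionResidual A V := by
  rw [compressionResidual, compression_add_smul_one hV, Matrix.mul_add, Matrix.add_mul,
    Matrix.mul_smul, Matrix.smul_mul, Matrix.mul_one, Matrix.one_mul, add_sub_add_right_eq_sub,
    compressionResidual]

end Compression

section CompressionInverse

variable {R ι κ : Type*} [CommRing R] [StarRing R] [Fintype ι] [DecidableEq ι] [Fintype κ]
  [DecidableEq κ] {A : Matrix ι ι R} {V : Matrix ι κ R}

theorem conjTranspose_mul_inv_mul_sub_inv_compression (hA : A.IsHermitian) (hV : Vᴴ * V = 1)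
    (hAdet : IsUnit A.det) (hTdet : IsUnit (Vᴴ * A * V).det) :
    Vᴴ * A⁻¹ * V - (Vᴴ * A * V)⁻¹ =
      -((Vᴴ * A * V)⁻¹ * ((compressionResidual A V)ᴴ * A⁻¹ * V)) := by
  have hres : (compressionResidual A V)ᴴ * A⁻¹ * V = 1 - (Vᴴ * A * V) * (Vᴴ * A⁻¹ * V) := by
    simp only [compressionResidual, conjTranspose_sub, conjTranspose_mul,
      conjTranspose_conjTranspose, hA.eq, Matrix.sub_mul, Matrix.mul_assoc]
    rw [mul_nonsing_inv_cancel_left A V hAdet, hV]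
  rw [hres, Matrix.mul_sub, Matrix.mul_one, nonsing_inv_mul_cancel_left _ _ hTdet, neg_sub]

theorem conjTranspose_compressionResidual_mul_inv_mul (hV : Vᴴ * V = 1)
    (hAdet : IsUnit A.det) (hTdet : IsUnit (Vᴴ * A * V).det) :
    (compressionResidual A V)ᴴ * A⁻¹ * V =
      -((compressionResidual A V)ᴴ * A⁻¹ * compressionResidual A V * (Vᴴ * A * V)⁻¹) := by
  have hres : A⁻¹ * compressionResidual A V * (Vᴴ * A * V)⁻¹ =
      V * (Vᴴ * A * V)⁻¹ - A⁻¹ * V := by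
    rw [compressionResidual, Matrix.mul_sub, nonsing_inv_mul_cancel_left A V hAdet, Matrix.sub_mul,
      ← Matrix.mul_assoc, mul_nonsing_inv_cancel_right _ _ hTdet]
  simp only [Matrix.mul_assoc] at hres ⊢
  rw [hres, Matrix.mul_sub, ← Matrix.mul_assoc _ V, conjTranspose_compressionResidual_mul hV,
    Matrix.zero_mul, zero_sub, neg_neg]

end CompressionInverse

section Hessenberg

variable {R : Type*} [CommRing R] {m : ℕ}

/-- A square matrix is upper Hessenberg if its entries below the first subdiagonal vanish. -/
def IsUpperHessenberg (M : Matrix (Fin m) (Fin m) R) : Prop :=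
  ∀ ⦃i j : Fin m⦄, (j : ℕ) + 1 < i → M i j = 0

theorem IsUpperHessenberg.add_smul_one {S : Type*} [SMulZeroClass S R]
    {M : Matrix (Fin m) (Fin m) R} (hM : IsUpperHessenberg M) (t : S) :
    IsUpperHessenberg (M + t • 1) := fun i j hij => by
  rw [Matrix.add_apply, Matrix.smul_apply, hM hij, one_apply_ne (by rintro rfl; omega),
    smul_zero, add_zero]

theorem IsUpperHessenberg.adjugate_last_zero {M : Matrix (Fin (m + 1)) (Fin (m + 1)) R}
    (hM : IsUpperHessenberg M) :
    M.adjugate (Fin.last m) 0 = (-1) ^ m * ∏ i : Fin m, M i.succ i.castSucc := by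
  have htri : (M.submatrix Fin.succ Fin.castSucc).IsUpperTriangular := fun i j hij =>
    hM (by simpa using hij)
  simp [adjugate_fin_succ_eq_det_submatrix, det_of_isUpperTriangular htri]

theorem IsUpperHessenberg.adjugate_add_smul_one_last_zero {S : Type*} [SMulZeroClass S R]
    {M : Matrix (Fin (m + 1)) (Fin (m + 1)) R} (hM : IsUpperHessenberg M) (t : S) :
    (M + t • 1).adjugate (Fin.last m) 0 = (-1) ^ m * ∏ i : Fin m, M i.succ i.castSucc := by
  rw [(hM.add_smul_one t).adjugate_last_zero]
  congr! 2 with i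
  rw [Matrix.add_apply, Matrix.smul_apply, one_apply_ne Fin.castSucc_lt_succ.ne', smul_zero,
    add_zero]

end Hessenberg

section LowerBoundCompression

open scoped MatrixOrder

variable {ι κ : Type*} [Fintype ι] [DecidableEq ι] [DecidableEq κ] {A : Matrix ι ι ℂ}
  {V : Matrix ι κ ℂ} {c : ℝ}

theorem smul_one_le_compression [Finite κ] (hcA : c • 1 ≤ A) (hV : Vᴴ * V = 1) :
    c • 1 ≤ Vᴴ * A * V := by
  have h := (Matrix.le_iff.1 hcA).conjTranspose_mul_mul_same V
  rwa [Matrix.mul_sub, Matrix.sub_mul, Matrix.mul_smul, Matrix.mul_one, Matrix.smul_mul, hV,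
    ← Matrix.le_iff] at h

variable [Fintype κ]

theorem conjTranspose_resolvent_mul_sub_resolvent_compression (hc : 0 < c)
    (hcA : c • 1 ≤ A) (hV : Vᴴ * V = 1) {t : ℝ} (ht : 0 ≤ t) :
    Vᴴ * (A + t • 1)⁻¹ * V - (Vᴴ * A * V + t • 1)⁻¹ =
      -((Vᴴ * A * V + t • 1)⁻¹ * ((compressionResidual A V)ᴴ * (A + t • 1)⁻¹ * V)) := by
  have hAt := posDef_add_smul_one_of_smul_one_le hc hcA ht
  have hTt := posDef_add_smul_one_of_smul_one_le hc (smul_one_le_compression hcA hV) ht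
  rw [← compression_add_smul_one hV t] at hTt ⊢
  rw [← compressionResidual_add_smul_one hV t]
  exact conjTranspose_mul_inv_mul_sub_inv_compression hAt.isHermitian hV
    hAt.det_pos.ne'.isUnit hTt.det_pos.ne'.isUnit

theorem norm_compression_cfc_sub_cfc_compression_le_integral {f : ℝ → ℝ} {μ : Measure ℝ}
    (hA : A.IsHermitian) (hc : 0 < c) (hcA : c • 1 ≤ A)
    (hμ : IntegrableOn (fun t => (1 + t)⁻¹) (Set.Ici 0) μ)
    (hf : ∀ z : ℝ, 0 < z → f z = ∫ t in Set.Ici (0 : ℝ), (z + t)⁻¹ ∂μ)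
    (hV : Vᴴ * V = 1) (u : EuclideanSpace ℂ κ) :
    ‖toEuclideanLin Vᴴ (toEuclideanLin (hA.cfc f) (toEuclideanLin V u)) -
        toEuclideanLin ((isHermitian_conjTranspose_mul_mul V hA).cfc f) u‖ ≤
      c⁻¹ * ∫ t in Set.Ici (0 : ℝ), ‖toEuclideanLin (compressionResidual A V)ᴴ
        (toEuclideanLin (A + t • 1)⁻¹ (toEuclideanLin V u))‖ ∂μ := by
  have hT := isHermitian_conjTranspose_mul_mul V hA
  have hcT := smul_one_le_compression hcA hV
  obtain ⟨hAint, hAeq⟩ := integrableOn_and_cfc_apply_eq_integral_of_stieltjes hA hc hcA hμ hf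
    (toEuclideanLin V u)
  obtain ⟨hTint, hTeq⟩ := integrableOn_and_cfc_apply_eq_integral_of_stieltjes hT hc hcT hμ hf u
  let P := (toEuclideanLin Vᴴ).toContinuousLinearMap
  let E := (toEuclideanLin (compressionResidual A V)ᴴ).toContinuousLinearMap
  have hPint : IntegrableOn (fun t : ℝ => P (toEuclideanLin (A + t • 1)⁻¹ (toEuclideanLin V u)))
      (Set.Ici 0) μ := P.integrable_comp hAint
  have hPeq : toEuclideanLin Vᴴ (toEuclideanLin (hA.cfc f) (toEuclideanLin V u)) =
      ∫ t in Set.Ici (0 : ℝ), P (toEuclideanLin (A + t • 1)⁻¹ (toEuclideanLin V u)) ∂μ := by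
    rw [hAeq]
    exact (P.integral_comp_comm hAint).symm
  rw [hPeq, hTeq, ← integral_sub hPint hTint, ← integral_const_mul]
  refine norm_integral_le_of_norm_le ((E.integrable_comp hAint).norm.const_mul _) ?_
  filter_upwards [ae_restrict_mem measurableSet_Ici] with t (ht : 0 ≤ t)
  have herr := congrArg (toEuclideanLin · u)
    (conjTranspose_resolvent_mul_sub_resolvent_compression hc hcA hV ht)
  simp only [map_sub, map_neg, LinearMap.sub_apply, LinearMap.neg_apply,
    toEuclideanLin_mul_apply] at herr
  change ‖toEuclideanLin Vᴴ _ - _‖ ≤ _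
  rw [herr, norm_neg]
  exact norm_inv_add_smul_one_apply_le hT hc hcT ht _

theorem exists_nonneg_conjTranspose_compressionResidual_mul_inv_mul_apply_eq {m : ℕ}
    {W : Matrix ι (Fin (m + 1)) ℂ} (hA : A.PosDef) (hT : (Wᴴ * A * W).PosDef) (hW : Wᴴ * W = 1)
    (hres : ∀ i, ∀ k ≠ Fin.last m, compressionResidual A W i k = 0) :
    ∃ s : ℝ, 0 ≤ s ∧ ((compressionResidual A W)ᴴ * A⁻¹ * W) (Fin.last m) 0 =
      s • (-(Wᴴ * A * W).adjugate (Fin.last m) 0) := by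
  set E := compressionResidual A W
  set T := Wᴴ * A * W
  have hcol : ∀ i, (Eᴴ * A⁻¹ * E * T⁻¹) (Fin.last m) i =
      (Eᴴ * A⁻¹ * E) (Fin.last m) (Fin.last m) * T⁻¹ (Fin.last m) i := fun i => by
    rw [mul_apply, Finset.sum_eq_single (Fin.last m)]
    · intro k _ hk
      rw [mul_apply, Finset.sum_eq_zero fun j _ => by rw [hres j k hk, mul_zero], zero_mul]
    · simp
  have hdiag := (hA.inv.posSemidef.conjTranspose_mul_mul_same E).diag_nonneg (i := Fin.last m)
  have hs := mul_nonneg hdiag (inv_nonneg.2 hT.det_pos.le)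
  obtain ⟨s, hs, hst⟩ := RCLike.nonneg_iff_exists_ofReal.1 hs
  refine ⟨s, hs, ?_⟩
  rw [conjTranspose_compressionResidual_mul_inv_mul hW hA.det_pos.ne'.isUnit hT.det_pos.ne'.isUnit,
    Matrix.neg_apply, hcol, inv_def T, Matrix.smul_apply, Ring.inverse_eq_inv', smul_eq_mul,
    ← mul_assoc, ← hst, Complex.real_smul, mul_neg]
  rfl

theorem exists_nonneg_conjTranspose_compressionResidual_resolvent_apply_eq {m : ℕ}
    {W : Matrix ι (Fin (m + 1)) ℂ} (hc : 0 < c) (hcA : c • 1 ≤ A) (hW : Wᴴ * W = 1)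
    (hT : IsUpperHessenberg (Wᴴ * A * W))
    (hres : ∀ i, ∀ k ≠ Fin.last m, compressionResidual A W i k = 0) {t : ℝ} (ht : 0 ≤ t) :
    ∃ s : ℝ, 0 ≤ s ∧ toEuclideanLin (compressionResidual A W)ᴴ
        (toEuclideanLin (A + t • 1)⁻¹ (toEuclideanLin W (EuclideanSpace.single 0 1))) =
      s • EuclideanSpace.single (Fin.last m)
        (-((-1) ^ m * ∏ i : Fin m, (Wᴴ * A * W) i.succ i.castSucc)) := by
  have hAt := posDef_add_smul_one_of_smul_one_le hc hcA ht
  have hTt := posDef_add_smul_one_of_smul_one_le hc (smul_one_le_compression hcA hW) ht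
  rw [← compression_add_smul_one hW t] at hTt
  rw [← compressionResidual_add_smul_one hW t] at hres ⊢
  obtain ⟨s, hs, hst⟩ :=
    exists_nonneg_conjTranspose_compressionResidual_mul_inv_mul_apply_eq hAt hTt hW hres
  rw [compression_add_smul_one hW, hT.adjugate_add_smul_one_last_zero] at hst
  refine ⟨s, hs, ?_⟩
  have hcorner := toEuclideanLin_single_apply
    ((compressionResidual (A + t • 1) W)ᴴ * (A + t • 1)⁻¹ * W) (Fin.last m) 0
  rw [hst, toEuclideanLin_mul_apply, toEuclideanLin_mul_apply,
    toEuclideanLin_conjTranspose_eq_single hres, PiLp.single_eq_same] at hcorner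
  rw [toEuclideanLin_conjTranspose_eq_single hres, hcorner]
  simp only [← PiLp.toLp_single, Pi.single_smul, WithLp.toLp_smul]

theorem norm_compression_cfc_sub_cfc_compression_le {m : ℕ} {W : Matrix ι (Fin (m + 1)) ℂ}
    {f : ℝ → ℝ} (hA : A.IsHermitian) (hc : 0 < c) (hcA : c • 1 ≤ A) (hf : IsStieltjes f)
    (hW : Wᴴ * W = 1) (hT : IsUpperHessenberg (Wᴴ * A * W))
    (hres : ∀ i, ∀ k ≠ Fin.last m, compressionResidual A W i k = 0) :
    ‖toEuclideanLin Wᴴ (toEuclideanLin (hA.cfc f) (toEuclideanLin W (EuclideanSpace.single 0 1))) -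
        toEuclideanLin ((isHermitian_conjTranspose_mul_mul W hA).cfc f)
          (EuclideanSpace.single 0 1)‖ ≤
      c⁻¹ * ‖toEuclideanLin (compressionResidual A W)ᴴ
        (toEuclideanLin (hA.cfc f) (toEuclideanLin W (EuclideanSpace.single 0 1)))‖ := by
  obtain ⟨μ, hμ, hfμ⟩ := hf
  set b := toEuclideanLin W (EuclideanSpace.single 0 1)
  obtain ⟨hint, heq⟩ := integrableOn_and_cfc_apply_eq_integral_of_stieltjes hA hc hcA hμ hfμ b
  let E := (toEuclideanLin (compressionResidual A W)ᴴ).toContinuousLinearMap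
  have hray : ∀ᵐ t ∂μ.restrict (Set.Ici (0 : ℝ)), ∃ s : ℝ, 0 ≤ s ∧
      E (toEuclideanLin (A + t • 1)⁻¹ b) = s • EuclideanSpace.single (Fin.last m)
        (-((-1) ^ m * ∏ i : Fin m, (Wᴴ * A * W) i.succ i.castSucc)) := by
    filter_upwards [ae_restrict_mem measurableSet_Ici] with t (ht : 0 ≤ t)
    exact exists_nonneg_conjTranspose_compressionResidual_resolvent_apply_eq hc hcA hW hT hres ht
  calc _ ≤ c⁻¹ * ∫ t in Set.Ici (0 : ℝ), ‖E (toEuclideanLin (A + t • 1)⁻¹ b)‖ ∂μ :=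
        norm_compression_cfc_sub_cfc_compression_le_integral hA hc hcA hμ hfμ hW _
    _ = c⁻¹ * ‖∫ t in Set.Ici (0 : ℝ), E (toEuclideanLin (A + t • 1)⁻¹ b) ∂μ‖ := by
        rw [norm_integral_eq_integral_norm_of_forall_mem_ray hray]
    _ = c⁻¹ * ‖E (toEuclideanLin (hA.cfc f) b)‖ := by rw [E.integral_comp_comm hint, heq]

end LowerBoundCompression

section Lanczos

variable {n m : ℕ} {A : Matrix (Fin n) (Fin n) ℂ} {b : EuclideanSpace ℂ (Fin n)}

theorem Krylov.toEuclideanLin_mem_succ {j : ℕ} {x : EuclideanSpace ℂ (Fin n)}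
    (hx : x ∈ Krylov A b j) : toEuclideanLin A x ∈ Krylov A b (j + 1) := by
  suffices Krylov A b j ≤ (Krylov A b (j + 1)).comap (toEuclideanLin A) from this hx
  refine Submodule.span_le.2 ?_
  rintro _ ⟨i, hi, rfl⟩
  refine Submodule.subset_span ⟨i + 1, by omega, ?_⟩
  rw [pow_succ', toEuclideanLin_mul_apply]

/-- `V = [v₀ | … | v_m]` is a Lanczos basis for the Krylov space `K_{m+1}(A, b)`: its columns are
orthonormal, `v₀ = b`, and the first `j` columns span `K_j(A, b)`. Columns are numbered from `0`
and there is at least one. -/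
structure IsLanczosBasis (A : Matrix (Fin n) (Fin n) ℂ) (b : EuclideanSpace ℂ (Fin n))
    (V : Matrix (Fin n) (Fin (m + 1)) ℂ) : Prop where
  isometry : Vᴴ * V = 1
  first : toEuclideanLin V (EuclideanSpace.single 0 1) = b
  span_eq : ∀ j : ℕ, 1 ≤ j → j ≤ m + 1 →
    Submodule.span ℂ {v | ∃ i : Fin (m + 1), (i : ℕ) < j ∧
      v = toEuclideanLin V (EuclideanSpace.single i 1)} = Krylov A b j

namespace IsLanczosBasis

variable {V : Matrix (Fin n) (Fin (m + 1)) ℂ}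

theorem exists_eq_toEuclideanLin_of_mem_krylov (hV : IsLanczosBasis A b V) {j : ℕ} (hj : 1 ≤ j)
    (hjm : j ≤ m + 1) {x : EuclideanSpace ℂ (Fin n)} (hx : x ∈ Krylov A b j) :
    ∃ y : EuclideanSpace ℂ (Fin (m + 1)), (∀ i : Fin (m + 1), j ≤ (i : ℕ) → y i = 0) ∧
      toEuclideanLin V y = x := by
  rw [← hV.span_eq j hj hjm] at hx
  induction hx using Submodule.span_induction with
  | mem _ hv =>
    obtain ⟨k, hk, rfl⟩ := hv
    exact ⟨EuclideanSpace.single k 1, fun i hi => PiLp.single_eq_of_ne 2 (by rintro rfl; omega) 1,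
      rfl⟩
  | zero => exact ⟨0, fun _ _ => rfl, map_zero _⟩
  | add _ _ _ _ hx hy =>
    obtain ⟨x, hx, rfl⟩ := hx
    obtain ⟨y, hy, rfl⟩ := hy
    exact ⟨x + y, fun i hi => by rw [PiLp.add_apply, hx i hi, hy i hi, add_zero], map_add _ _ _⟩
  | smul a _ _ hx =>
    obtain ⟨x, hx, rfl⟩ := hx
    exact ⟨a • x, fun i hi => by rw [PiLp.smul_apply, hx i hi, smul_zero], map_smul _ _ _⟩

theorem exists_eq_toEuclideanLin_apply_column (hV : IsLanczosBasis A b V) {k : Fin (m + 1)}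
    (hk : k ≠ Fin.last m) :
    ∃ y : EuclideanSpace ℂ (Fin (m + 1)), (∀ i : Fin (m + 1), (k : ℕ) + 1 < i → y i = 0) ∧
      toEuclideanLin V y = toEuclideanLin A (toEuclideanLin V (EuclideanSpace.single k 1)) := by
  have hkm : (k : ℕ) < m := Fin.val_lt_last hk
  refine hV.exists_eq_toEuclideanLin_of_mem_krylov (j := k + 2) (by omega) (by omega)
    (Krylov.toEuclideanLin_mem_succ ?_)
  rw [← hV.span_eq (k + 1) (by omega) (by omega)]
  exact Submodule.subset_span ⟨k, by omega, rfl⟩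

theorem isUpperHessenberg_compression (hV : IsLanczosBasis A b V) :
    IsUpperHessenberg (Vᴴ * A * V) := fun i k hik => by
  obtain ⟨y, hy, hVy⟩ := hV.exists_eq_toEuclideanLin_apply_column (k := k)
    (by rintro rfl; exact absurd hik (by rw [Fin.val_last]; omega))
  rw [← toEuclideanLin_single_apply (Vᴴ * A * V) i k, Matrix.mul_assoc, toEuclideanLin_mul_apply,
    toEuclideanLin_mul_apply, ← hVy, toEuclideanLin_conjTranspose_apply_of_isometry hV.isometry,
    hy i hik]

theorem compressionResidual_apply_eq_zero (hV : IsLanczosBasis A b V) (i : Fin n)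
    (k : Fin (m + 1)) (hk : k ≠ Fin.last m) : compressionResidual A V i k = 0 := by
  obtain ⟨y, -, hVy⟩ := hV.exists_eq_toEuclideanLin_apply_column hk
  rw [← toEuclideanLin_single_apply (compressionResidual A V) i k, compressionResidual, map_sub,
    LinearMap.sub_apply, Matrix.mul_assoc]
  simp only [toEuclideanLin_mul_apply]
  rw [← hVy, toEuclideanLin_conjTranspose_apply_of_isometry hV.isometry, sub_self, PiLp.zero_apply]

end IsLanczosBasis

end Lanczos

open scoped MatrixOrder in
theorem lanczos_near_instance_optimality_stieltjes_beta_general {n m : ℕ}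
    {A : Matrix (Fin n) (Fin n) ℂ} (hA : A.IsHermitian) {c : ℝ} (hc : 0 < c)
    (hcA : ∀ i, c ≤ hA.eigenvalues i) {b : EuclideanSpace ℂ (Fin n)} {f : ℝ → ℝ}
    (hf : IsStieltjes f) {V : Matrix (Fin n) (Fin (m + 1)) ℂ} (hV : IsLanczosBasis A b V)
    {x : EuclideanSpace ℂ (Fin n)} (hx : x ∈ Krylov A b (m + 1)) :
    ‖toEuclideanLin (hA.cfc f) b - toEuclideanLin V
        (toEuclideanLin ((isHermitian_conjTranspose_mul_mul V hA).cfc f) (toEuclideanLin Vᴴ b))‖ ≤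
      (1 + ‖toEuclideanLin (compressionResidual A V) (EuclideanSpace.single (Fin.last m) 1)‖ / c) *
        ‖toEuclideanLin (hA.cfc f) b - x‖ := by
  obtain ⟨z, -, rfl⟩ := hV.exists_eq_toEuclideanLin_of_mem_krylov (by omega) le_rfl hx
  have hb : toEuclideanLin Vᴴ b = EuclideanSpace.single 0 1 := by
    rw [← hV.first, toEuclideanLin_conjTranspose_apply_of_isometry hV.isometry]
  have hcomp := norm_compression_cfc_sub_cfc_compression_le hA hc
    ((smul_one_le_iff_forall_le_eigenvalues hA).2 hcA) hf hV.isometry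
    hV.isUpperHessenberg_compression hV.compressionResidual_apply_eq_zero
  rw [hV.first] at hcomp
  set y := toEuclideanLin (hA.cfc f) b
  set fT := toEuclideanLin ((isHermitian_conjTranspose_mul_mul V hA).cfc f)
    (EuclideanSpace.single 0 1)
  set β := ‖toEuclideanLin (compressionResidual A V) (EuclideanSpace.single (Fin.last m) 1)‖
  have hres : ‖toEuclideanLin (compressionResidual A V)ᴴ y‖ ≤ β * ‖y - toEuclideanLin V z‖ := by
    have hVz : toEuclideanLin (compressionResidual A V)ᴴ (toEuclideanLin V z) = 0 := by
      rw [← toEuclideanLin_mul_apply, conjTranspose_compressionResidual_mul hV.isometry, map_zero,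
        LinearMap.zero_apply]
    rw [← sub_zero (toEuclideanLin _ y), ← hVz, ← map_sub]
    exact norm_toEuclideanLin_conjTranspose_le hV.compressionResidual_apply_eq_zero _
  calc ‖y - toEuclideanLin V (toEuclideanLin _ (toEuclideanLin Vᴴ b))‖
      = ‖(y - toEuclideanLin V (toEuclideanLin Vᴴ y)) +
          toEuclideanLin V (toEuclideanLin Vᴴ y - fT)‖ := by rw [hb, map_sub, sub_add_sub_cancel]
    _ ≤ ‖y - toEuclideanLin V (toEuclideanLin Vᴴ y)‖ + ‖toEuclideanLin Vᴴ y - fT‖ := by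
        rw [← norm_toEuclideanLin_of_isometry hV.isometry (toEuclideanLin Vᴴ y - fT)]
        exact norm_add_le _ _
    _ ≤ ‖y - toEuclideanLin V z‖ + c⁻¹ * (β * ‖y - toEuclideanLin V z‖) := by
        gcongr
        · exact norm_sub_projection_le hV.isometry y z
        · exact hcomp.trans (by gcongr)
    _ = (1 + β / c) * ‖y - toEuclideanLin V z‖ := by ring

/-- **Near instance optimality of Lanczos for Stieltjes functions**
(Theorem 3.1, bound (3.1)): for a Lanczos basis `V = [v₁ | … | v_m]` of `K_m(A,b)`
(orthonormal columns, `v₁ = b`, nested Krylov spans) and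
`β_{m+1} = ‖A v_m − V (V* A V) e_m‖`, the Lanczos approximation
`f_m = V f(V* A V) V* b` satisfies
`‖f(A)b − f_m‖ ≤ (1 + β_{m+1} λ_max/λ_min²) ‖f(A)b − x‖` for every `x ∈ K_m(A,b)`. -/
theorem lanczos_near_instance_optimality_stieltjes_beta
    {n m : ℕ} (hm : 1 ≤ m)
    (A : Matrix (Fin n) (Fin n) ℂ) (hA : A.IsHermitian) (hApd : A.PosDef)
    (lmin lmax : ℝ)
    (hlmin_mem : ∃ i, hA.eigenvalues i = lmin) (hlmin : ∀ i, lmin ≤ hA.eigenvalues i)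
    (hlmax_mem : ∃ i, hA.eigenvalues i = lmax) (hlmax : ∀ i, hA.eigenvalues i ≤ lmax)
    (b : EuclideanSpace ℂ (Fin n)) (hb : ‖b‖ = 1)
    (f : ℝ → ℝ) (hf : IsStieltjes f)
    (V : Matrix (Fin n) (Fin m) ℂ)
    -- the columns of `V` are orthonormal
    (hVorth : Vᴴ * V = 1)
    -- the first column of `V` is `b`
    (hVfirst : Matrix.toEuclideanLin V (EuclideanSpace.single ⟨0, hm⟩ 1) = b)
    -- for every `1 ≤ j ≤ m`, the first `j` columns of `V` span `K_j(A,b)`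
    (hVnested : ∀ j : ℕ, 1 ≤ j → j ≤ m →
      Submodule.span ℂ {v | ∃ i : Fin m, (i : ℕ) < j ∧
        v = Matrix.toEuclideanLin V (EuclideanSpace.single i 1)} = Krylov A b j)
    -- `β_{m+1} = ‖A v_m − V (V* A V) e_m‖`
    (β : ℝ)
    (hβ : β = ‖Matrix.toEuclideanLin A
        (Matrix.toEuclideanLin V (EuclideanSpace.single ⟨m - 1, by omega⟩ 1)) -
      Matrix.toEuclideanLin V
        (Matrix.toEuclideanLin (Vᴴ * A * V) (EuclideanSpace.single ⟨m - 1, by omega⟩ 1))‖)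
    (fm : EuclideanSpace ℂ (Fin n))
    (hfm : fm = Matrix.toEuclideanLin V
      (Matrix.toEuclideanLin ((Matrix.isHermitian_conjTranspose_mul_mul V hA).cfc f)
        (Matrix.toEuclideanLin Vᴴ b)))
    (x : EuclideanSpace ℂ (Fin n)) (hx : x ∈ Krylov A b m) :
    ‖Matrix.toEuclideanLin (hA.cfc f) b - fm‖ ≤
      (1 + β * lmax / lmin ^ 2) * ‖Matrix.toEuclideanLin (hA.cfc f) b - x‖ := by
  obtain ⟨k, rfl⟩ : ∃ k, m = k + 1 := ⟨m - 1, by omega⟩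
  have hlpos : 0 < lmin := by
    obtain ⟨i, rfl⟩ := hlmin_mem
    exact hApd.eigenvalues_pos i
  have hlle : lmin ≤ lmax := by
    obtain ⟨i, rfl⟩ := hlmin_mem
    exact hlmax i
  have hβE : β = ‖toEuclideanLin (compressionResidual A V)
      (EuclideanSpace.single (Fin.last k) 1)‖ := by
    rw [hβ, compressionResidual, map_sub, LinearMap.sub_apply, toEuclideanLin_mul_apply A V,
      toEuclideanLin_mul_apply V]
    rfl
  have hβ0 : 0 ≤ β := hβ ▸ norm_nonneg _
  have hβle : β / lmin ≤ β * lmax / lmin ^ 2 := by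
    rw [← mul_div_mul_right β lmin hlpos.ne', ← sq]
    gcongr
  calc ‖toEuclideanLin (hA.cfc f) b - fm‖
      ≤ (1 + β / lmin) * ‖toEuclideanLin (hA.cfc f) b - x‖ := by
        rw [hfm, hβE]
        exact lanczos_near_instance_optimality_stieltjes_beta_general hA hlpos hlmin hf
          ⟨hVorth, hVfirst, hVnested⟩ hx
    _ ≤ (1 + β * lmax / lmin ^ 2) * ‖toEuclideanLin (hA.cfc f) b - x‖ := by gcongr
end

section
/- Let A ∈ ℂ^{n×n} be Hermitian positive definite with smallest eigenvalue λ_min and largest eigenvalue λ_max, let b ∈ ℂ^n with ‖b‖ = 1, let g be a Stieltjes function and set f(z) := z·g(z), and let m ≥ 1. Let V_m = [v_1 | … | v_m] ∈ ℂ^{n×m} be a Lanczos basis for K_m(A,b), set β_{m+1} := ‖A v_m − V_m (V_m* A V_m) e_m^{(m)}‖, and let f_m := V_m f(V_m* A V_m) V_m* b. Then for every x ∈ K_m(A,b), ‖f(A)b − f_m‖ ≤ (1 + β_{m+1} λ_max/λ_min²) ‖f(A)b − x‖. -/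
open MeasureTheory Matrix ComplexOrder

/-!
With `f z = z * g z` and `g` the Stieltjes transform of `μ`, one has `f(A) b = ∫ F_t dμ(t)` for
`F_t = A (A + t)⁻¹ b`, and likewise `f(T) e = ∫ G_t dμ(t)` for the compression `T = V* A V` and
`e = V* b`. The Lanczos relation `A V = V T + r q*`, with `q` the last coordinate vector and `r` the
residual orthogonal to the range of `V`, gives `V* F_t - G_t = -⟪r, F_t⟫ (T + t)⁻¹ q`. The scalar
`⟪r, F_t⟫` is a nonnegative multiple of `⟪q, (T + t)⁻¹ e⟫`, whose phase does not depend on `t`: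
by Cayley–Hamilton it is a constant divided by the characteristic polynomial of `T` at `-t`. Hence
`‖V* f(A) b - f(T) e‖ ≤ c⁻¹ ∫ |⟪r, F_t⟫| dμ(t) = c⁻¹ |⟪r, f(A) b⟫|` if `A ≥ c`, and `f(A) b` can be
replaced by `f(A) b - x` in the last inner product because `r` is orthogonal to the Krylov space.
-/

section Polynomial
open Polynomial

variable {K : Type*} [CommRing K]

lemma eval_neg_smul_eq_neg_aeval_divByMonic {B : Type*} [Ring B] [Algebra K B] {a r : B} {t : K}
    (hr : r * (a + algebraMap K B t) = 1) {p : K[X]} (hp : aeval a p = 0) :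
    p.eval (-t) • r = -aeval a (p /ₘ (X - C (-t))) := by
  set s := p /ₘ (X - C (-t))
  have hdiv : C (p.eval (-t)) + (X - C (-t)) * s = p := by
    rw [← modByMonic_X_sub_C_eq_C_eval, modByMonic_add_div]
  have ha : algebraMap K B (p.eval (-t)) + (a + algebraMap K B t) * aeval a s = 0 := by
    rw [← hp]
    conv_rhs => rw [← hdiv]
    simp
  have hra := congrArg (r * ·) ha
  simp only [mul_add, ← mul_assoc, mul_zero] at hra
  rw [← mul_add, hr, one_mul, ← Algebra.commutes, ← Algebra.smul_def] at hra
  exact eq_neg_of_add_eq_zero_left hra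

/-- The quotient `(p - p(-t)) / (X + t)` has degree at most `k`, and its coefficient of degree `k`
does not depend on `t`. -/
lemma eval_neg_mul_apply_resolvent {F : Type*} [AddCommGroup F] [Module K F]
    {T R : Module.End K F} {t : K} (hR : R * (T + algebraMap K _ t) = 1) {ℓ : F →ₗ[K] K}
    {e : F} {k : ℕ} (hℓ : ∀ j < k, ℓ ((T ^ j) e) = 0) {p : K[X]} (hp : aeval T p = 0)
    (hdeg : p.natDegree ≤ k + 1) :
    p.eval (-t) * ℓ (R e) = -(p.coeff (k + 1) * ℓ ((T ^ k) e)) := by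
  set s := p /ₘ (X - C (-t)) with hs
  have hsdeg : s.natDegree ≤ k := by
    nontriviality K
    rw [hs, natDegree_divByMonic _ (monic_X_sub_C _), natDegree_X_sub_C]
    omega
  have hcoeff : s.coeff k = p.coeff (k + 1) := by
    rw [hs, coeff_divByMonic_X_sub_C_rec, ← hs,
      coeff_eq_zero_of_natDegree_lt (Nat.lt_succ_of_le hsdeg), mul_zero, add_zero]
  have hsum : ℓ (aeval T s e) = s.coeff k * ℓ ((T ^ k) e) := by
    rw [aeval_eq_sum_range' (Nat.lt_succ_of_le hsdeg), Finset.sum_range_succ]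
    simp only [LinearMap.add_apply, LinearMap.sum_apply, LinearMap.smul_apply, map_add, map_sum,
      map_smul, smul_eq_mul]
    rw [Finset.sum_eq_zero fun j hj => by rw [hℓ j (Finset.mem_range.1 hj), mul_zero], zero_add]
  have hres := congrArg (ℓ ∘ (· e)) (eval_neg_smul_eq_neg_aeval_divByMonic hR hp)
  rwa [Function.comp_apply, Function.comp_apply, LinearMap.smul_apply, LinearMap.neg_apply,
    map_smul, map_neg ℓ, smul_eq_mul, ← hs, hsum, hcoeff] at hres

end Polynomial

section Integral

variable {α E : Type*} [MeasurableSpace α] {μ : Measure α} [NormedAddCommGroup E]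
  [NormedSpace ℝ E] [CompleteSpace E]

lemma norm_integral_eq_integral_norm_of_ray {h : α → E} {w : E}
    (hw : ∀ᵐ x ∂μ, ∃ s : ℝ, 0 ≤ s ∧ h x = s • w) : ‖∫ x, h x ∂μ‖ = ∫ x, ‖h x‖ ∂μ := by
  have heq : h =ᵐ[μ] fun x => (‖h x‖ * ‖w‖⁻¹) • w := by
    filter_upwards [hw] with x ⟨s, hs, hx⟩
    rcases eq_or_ne w 0 with rfl | hw0
    · simpa using hx
    · rw [hx, norm_smul, Real.norm_of_nonneg hs, mul_inv_cancel_right₀ (norm_ne_zero_iff.2 hw0)]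
  have hnorm : (fun x => ‖h x‖) =ᵐ[μ] fun x => ‖h x‖ * ‖w‖⁻¹ * ‖w‖ := by
    filter_upwards [heq] with x hx
    conv_lhs => rw [hx, norm_smul, Real.norm_of_nonneg (by positivity)]
  rw [integral_congr_ae heq, integral_congr_ae hnorm, integral_smul_const, norm_smul,
    Real.norm_of_nonneg (integral_nonneg fun x => by positivity), integral_mul_const,
    integral_mul_const, integral_mul_const]

end Integral

section ShiftedInverse

variable {B : Type*} [CStarAlgebra B]

/-- The shifted inverse `(a + t)⁻¹` of a selfadjoint element `a`, through the functional
calculus; it is an inverse only where `-t` is not in the spectrum of `a`. -/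
noncomputable def shiftedInv (a : B) (t : ℝ) : B := cfc (fun z : ℝ => (z + t)⁻¹) a

variable [PartialOrder B] [StarOrderedRing B] {a : B} {c t : ℝ}

lemma isSelfAdjoint_of_algebraMap_le (ha : algebraMap ℝ B c ≤ a) : IsSelfAdjoint a :=
  .of_ge ha (.algebraMap B (.all c))

lemma le_of_mem_spectrum_of_algebraMap_le (ha : algebraMap ℝ B c ≤ a) {z : ℝ}
    (hz : z ∈ spectrum ℝ a) : c ≤ z :=
  (algebraMap_le_iff_le_spectrum (isSelfAdjoint_of_algebraMap_le ha)).1 ha z hz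

variable (hc : 0 < c) (ha : algebraMap ℝ B c ≤ a)
include hc ha

lemma continuousOn_inv_add_spectrum (ht : 0 ≤ t) :
    ContinuousOn (fun z : ℝ => (z + t)⁻¹) (spectrum ℝ a) := by
  refine ContinuousOn.inv₀ (by fun_prop) fun z hz => ?_
  have hcz := le_of_mem_spectrum_of_algebraMap_le ha hz
  linarith

lemma mul_shiftedInv (ht : 0 ≤ t) : a * shiftedInv a t = cfc (fun z : ℝ => z * (z + t)⁻¹) a := by
  have := isSelfAdjoint_of_algebraMap_le ha
  have := continuousOn_inv_add_spectrum hc ha ht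
  rw [shiftedInv, cfc_mul .., cfc_id' ..]

lemma shiftedInv_mul_add_algebraMap (ht : 0 ≤ t) :
    shiftedInv a t * (a + algebraMap ℝ B t) = 1 := by
  have hsa := isSelfAdjoint_of_algebraMap_le ha
  have hcont := continuousOn_inv_add_spectrum hc ha ht
  have hshift : a + algebraMap ℝ B t = cfc (fun z : ℝ => z + t) a := by
    rw [cfc_add_const t (fun z => z) a, cfc_id' ℝ a]
  rw [shiftedInv, hshift, ← cfc_mul .., ← cfc_one ℝ a]
  refine cfc_congr fun z hz => inv_mul_cancel₀ ?_
  have hcz := le_of_mem_spectrum_of_algebraMap_le ha hz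
  linarith

lemma add_algebraMap_mul_shiftedInv (ht : 0 ≤ t) :
    (a + algebraMap ℝ B t) * shiftedInv a t = 1 := by
  have hsa := isSelfAdjoint_of_algebraMap_le ha
  have hcomm : Commute a (shiftedInv a t) := by
    simpa only [cfc_id ℝ a] using! cfc_commute_cfc (id : ℝ → ℝ) (fun z : ℝ => (z + t)⁻¹) a
  rw [(hcomm.add_left (Algebra.commute_algebraMap_left t _)).eq,
    shiftedInv_mul_add_algebraMap hc ha ht]

lemma shiftedInv_nonneg (ht : 0 ≤ t) : 0 ≤ shiftedInv a t :=
  cfc_nonneg fun z hz => by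
    have hcz := le_of_mem_spectrum_of_algebraMap_le ha hz
    exact inv_nonneg.2 (by linarith)

lemma norm_shiftedInv_le (ht : 0 ≤ t) : ‖shiftedInv a t‖ ≤ c⁻¹ := by
  refine norm_cfc_le (by positivity) fun z hz => ?_
  have hcz := le_of_mem_spectrum_of_algebraMap_le ha hz
  rw [norm_inv, Real.norm_of_nonneg (by linarith)]
  gcongr
  linarith

omit hc ha in
lemma mul_inv_add_le_max_mul_inv_add {z N : ℝ} (hz : 0 < z) (hzN : z ≤ N) (ht : 0 ≤ t) :
    z * (z + t)⁻¹ ≤ max 1 N * (1 + t)⁻¹ := by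
  rw [← div_eq_mul_inv, ← div_eq_mul_inv, div_le_div_iff₀ (by positivity) (by positivity)]
  nlinarith [mul_le_mul_of_nonneg_right (le_max_left 1 N) hz.le,
    mul_le_mul_of_nonneg_right (hzN.trans (le_max_right 1 N)) ht]

lemma continuousOn_mul_inv_add_spectrum :
    ContinuousOn (Function.uncurry fun t z : ℝ => z * (z + t)⁻¹) (Set.Ici 0 ×ˢ spectrum ℝ a) := by
  refine ContinuousOn.mul (by fun_prop) (ContinuousOn.inv₀ (by fun_prop) ?_)
  rintro ⟨t, z⟩ ⟨ht, hz⟩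
  exact (add_pos_of_pos_of_nonneg (hc.trans_le (le_of_mem_spectrum_of_algebraMap_le ha hz)) ht).ne'

lemma norm_mul_inv_add_le_of_mem_spectrum {t : ℝ} (ht : 0 ≤ t) {z : ℝ} (hz : z ∈ spectrum ℝ a) :
    ‖z * (z + t)⁻¹‖ ≤ max 1 ‖a‖ * (1 + t)⁻¹ := by
  have hsa := isSelfAdjoint_of_algebraMap_le ha
  have hz0 : 0 < z := hc.trans_le (le_of_mem_spectrum_of_algebraMap_le ha hz)
  have hzN : z ≤ ‖a‖ := (le_algebraMap_iff_spectrum_le hsa).1 hsa.le_algebraMap_norm_self z hz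
  rw [Real.norm_of_nonneg (by positivity)]
  exact mul_inv_add_le_max_mul_inv_add hz0 hzN ht

variable {μ : Measure ℝ} (hμ : IntegrableOn (fun t => (1 + t)⁻¹) (Set.Ici 0) μ)
include hμ

lemma integrableOn_mul_shiftedInv : IntegrableOn (fun t => a * shiftedInv a t) (Set.Ici 0) μ := by
  have hsa := isSelfAdjoint_of_algebraMap_le ha
  refine (integrableOn_cfc measurableSet_Ici _ _ a (continuousOn_mul_inv_add_spectrum hc ha)
    (ae_restrict_of_forall_mem measurableSet_Ici fun t ht z hz =>
      norm_mul_inv_add_le_of_mem_spectrum hc ha ht hz)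
    (hμ.const_mul (max 1 ‖a‖)).hasFiniteIntegral).congr_fun (fun t ht => ?_) measurableSet_Ici
  exact (mul_shiftedInv hc ha ht).symm

lemma cfc_mul_eq_integral_mul_shiftedInv {g : ℝ → ℝ}
    (hg : ∀ z : ℝ, 0 < z → g z = ∫ t in Set.Ici (0 : ℝ), (z + t)⁻¹ ∂μ) :
    cfc (fun z => z * g z) a = ∫ t in Set.Ici 0, a * shiftedInv a t ∂μ := by
  have hsa := isSelfAdjoint_of_algebraMap_le ha
  have hpos {z : ℝ} (hz : z ∈ spectrum ℝ a) : 0 < z :=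
    hc.trans_le (le_of_mem_spectrum_of_algebraMap_le ha hz)
  calc cfc (fun z => z * g z) a
      = cfc (fun z : ℝ => ∫ t in Set.Ici 0, z * (z + t)⁻¹ ∂μ) a :=
        cfc_congr fun z hz => by rw [hg z (hpos hz), integral_const_mul]
    _ = ∫ t in Set.Ici 0, cfc (fun z : ℝ => z * (z + t)⁻¹) a ∂μ :=
        cfc_setIntegral measurableSet_Ici _ _ a (continuousOn_mul_inv_add_spectrum hc ha)
          (ae_restrict_of_forall_mem measurableSet_Ici fun t ht z hz =>
            norm_mul_inv_add_le_of_mem_spectrum hc ha ht hz)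
          (hμ.const_mul (max 1 ‖a‖)).hasFiniteIntegral
    _ = ∫ t in Set.Ici 0, a * shiftedInv a t ∂μ :=
        setIntegral_congr_fun measurableSet_Ici fun t ht => (mul_shiftedInv hc ha ht).symm

end ShiftedInverse

section Compression

open scoped InnerProduct InnerProductSpace

variable {E F : Type*} [NormedAddCommGroup E] [InnerProductSpace ℂ E] [CompleteSpace E]
  [NormedAddCommGroup F] [InnerProductSpace ℂ F] [CompleteSpace F]

/-- The compression `V* A V` of `A` along an isometry `V`. -/
noncomputable def compression (A : E →L[ℂ] E) (V : F →ₗᵢ[ℂ] E) : F →L[ℂ] F :=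
  V.toContinuousLinearMap† ∘L A ∘L V.toContinuousLinearMap

lemma adjoint_isometry_apply_apply (V : F →ₗᵢ[ℂ] E) (y : F) :
    (V.toContinuousLinearMap†) (V y) = y :=
  ext_inner_left ℂ fun z => by
    rw [ContinuousLinearMap.adjoint_inner_right, V.coe_toContinuousLinearMap, V.inner_map_map]

lemma isometry_adjoint_apply_of_mem_range (V : F →ₗᵢ[ℂ] E) {x : E}
    (hx : x ∈ LinearMap.range V.toLinearMap) : V ((V.toContinuousLinearMap†) x) = x := by
  obtain ⟨y, rfl⟩ := hx
  rw [V.coe_toLinearMap, adjoint_isometry_apply_apply]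

lemma norm_sub_isometry_adjoint_apply_le (V : F →ₗᵢ[ℂ] E) (x : E) (y : F) :
    ‖x - V ((V.toContinuousLinearMap†) x)‖ ≤ ‖x - V y‖ := by
  have horth :
      ⟪x - V ((V.toContinuousLinearMap†) x), V ((V.toContinuousLinearMap†) x - y)⟫_ℂ = 0 := by
    rw [← V.coe_toContinuousLinearMap, ← ContinuousLinearMap.adjoint_inner_left, map_sub,
      V.coe_toContinuousLinearMap, adjoint_isometry_apply_apply, sub_self, inner_zero_left]
  have hpyth := norm_add_sq_eq_norm_sq_add_norm_sq_of_inner_eq_zero _ _ horth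
  rw [map_sub, sub_add_sub_cancel] at hpyth
  exact (mul_self_le_mul_self_iff (norm_nonneg _) (norm_nonneg _)).2
    (hpyth ▸ le_add_of_nonneg_right (mul_self_nonneg _))

lemma algebraMap_le_compression {A : E →L[ℂ] E} {c : ℝ} (hA : algebraMap ℝ _ c ≤ A)
    (V : F →ₗᵢ[ℂ] E) : algebraMap ℝ _ c ≤ compression A V := by
  have hpos := ((ContinuousLinearMap.le_def _ _).1 hA).adjoint_conj V.toContinuousLinearMap
  rw [ContinuousLinearMap.le_def]
  convert hpos using 1
  ext y
  simp [compression, adjoint_isometry_apply_apply, Algebra.algebraMap_eq_smul_one]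

/-- The defect `A V q - V (V* A V) q` of the invariance of the range of `V` under `A`. -/
noncomputable def lanczosResidual (A : E →L[ℂ] E) (V : F →ₗᵢ[ℂ] E) (q : F) : E :=
  A (V q) - V (compression A V q)

lemma adjoint_lanczosResidual (A : E →L[ℂ] E) (V : F →ₗᵢ[ℂ] E) (q : F) :
    (V.toContinuousLinearMap†) (lanczosResidual A V q) = 0 := by
  rw [lanczosResidual, map_sub, adjoint_isometry_apply_apply, sub_eq_zero]
  rfl

lemma inner_lanczosResidual_isometry_apply (A : E →L[ℂ] E) (V : F →ₗᵢ[ℂ] E) (q y : F) :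
    ⟪lanczosResidual A V q, V y⟫_ℂ = 0 := by
  rw [← V.coe_toContinuousLinearMap, ← ContinuousLinearMap.adjoint_inner_left,
    adjoint_lanczosResidual, inner_zero_left]

end Compression

section Lanczos

open scoped InnerProduct InnerProductSpace

variable {E F : Type*} [NormedAddCommGroup E] [InnerProductSpace ℂ E]
  [NormedAddCommGroup F] [InnerProductSpace ℂ F]

/-- The Krylov subspace `K_m(A, b)` of an operator `A`. -/
def krylovSpace (A : E →L[ℂ] E) (b : E) (m : ℕ) : Submodule ℂ E :=
  Submodule.span ℂ (Set.range fun i : Fin m => (A ^ (i : ℕ)) b)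

lemma pow_apply_mem_krylovSpace (A : E →L[ℂ] E) (b : E) {j m : ℕ} (hj : j < m) :
    (A ^ j) b ∈ krylovSpace A b m :=
  Submodule.subset_span ⟨⟨j, hj⟩, rfl⟩

lemma apply_mem_krylovSpace_succ {A : E →L[ℂ] E} {b x : E} {m : ℕ} (hx : x ∈ krylovSpace A b m) :
    A x ∈ krylovSpace A b (m + 1) := by
  suffices krylovSpace A b m ≤ (krylovSpace A b (m + 1)).comap A.toLinearMap from this hx
  refine Submodule.span_le.2 ?_
  rintro _ ⟨i, rfl⟩
  have := pow_apply_mem_krylovSpace A b (Nat.succ_lt_succ i.2)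
  rwa [pow_succ'] at this

lemma exists_add_smul_of_mem_krylovSpace_succ {A : E →L[ℂ] E} {b x : E} {m : ℕ}
    (hx : x ∈ krylovSpace A b (m + 1)) :
    ∃ u ∈ krylovSpace A b m, ∃ a : ℂ, x = u + a • (A ^ m) b := by
  obtain ⟨w, rfl⟩ := (Submodule.mem_span_range_iff_exists_fun ℂ).1 hx
  refine ⟨∑ i : Fin m, w i.castSucc • (A ^ (i : ℕ)) b,
    Submodule.sum_mem _ fun i _ => Submodule.smul_mem _ _ (pow_apply_mem_krylovSpace A b i.2),
    w (Fin.last m), ?_⟩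
  simp [Fin.sum_univ_castSucc]

/-- `V` maps an abstract coordinate space isometrically onto `K_{k+1}(A, b)`, and `q` is the
coordinate vector of the last Lanczos vector: `V q` is the unit vector that completes `K_k(A, b)`
to `K_{k+1}(A, b)`. -/
structure IsLanczosIsometry (A : E →L[ℂ] E) (b : E) (k : ℕ) (V : F →ₗᵢ[ℂ] E) (q : F) : Prop where
  range_eq : LinearMap.range V.toLinearMap = krylovSpace A b (k + 1)
  norm_last : ‖q‖ = 1
  inner_last : ∀ y ∈ krylovSpace A b k, ⟪V q, y⟫_ℂ = 0

namespace IsLanczosIsometry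

variable {A : E →L[ℂ] E} {b : E} {k : ℕ} {V : F →ₗᵢ[ℂ] E} {q : F} (h : IsLanczosIsometry A b k V q)
include h

lemma pow_apply_mem_range {j : ℕ} (hj : j ≤ k) : (A ^ j) b ∈ LinearMap.range V.toLinearMap :=
  h.range_eq ▸ pow_apply_mem_krylovSpace A b (Nat.lt_succ_of_le hj)

lemma finiteDimensional : FiniteDimensional ℂ F :=
  have : FiniteDimensional ℂ (LinearMap.range V.toLinearMap) :=
    h.range_eq ▸ FiniteDimensional.span_of_finite ℂ (Set.finite_range _)
  .of_injective V.toLinearMap.rangeRestrict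
    ((LinearMap.injective_rangeRestrict_iff _).2 V.injective)

lemma finrank_le : Module.finrank ℂ F ≤ k + 1 := by
  rw [← LinearMap.finrank_range_of_inj (f := V.toLinearMap) V.injective, h.range_eq, krylovSpace]
  exact (finrank_range_le_card _).trans (Fintype.card_fin _).le

lemma inner_last_pow_apply_ne_zero : ⟪V q, (A ^ k) b⟫_ℂ ≠ 0 := by
  obtain ⟨u, hu, a, hq⟩ := exists_add_smul_of_mem_krylovSpace_succ
    (h.range_eq ▸ LinearMap.mem_range_self V.toLinearMap q : V q ∈ krylovSpace A b (k + 1))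
  intro hzero
  have hinner : ⟪V q, V q⟫_ℂ = 0 := by
    nth_rw 2 [hq]
    rw [inner_add_right, inner_smul_right, h.inner_last u hu, hzero, mul_zero, add_zero]
  have hnorm : ‖V q‖ = 1 := by rw [V.norm_map, h.norm_last]
  rw [inner_self_eq_zero.1 hinner, norm_zero] at hnorm
  exact zero_ne_one hnorm

lemma isometry_apply_mem_krylovSpace {y : F} (hy : ⟪q, y⟫_ℂ = 0) : V y ∈ krylovSpace A b k := by
  obtain ⟨u, hu, a, hVy⟩ := exists_add_smul_of_mem_krylovSpace_succ
    (h.range_eq ▸ LinearMap.mem_range_self V.toLinearMap y : V y ∈ krylovSpace A b (k + 1))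
  have ha : a * ⟪V q, (A ^ k) b⟫_ℂ = 0 := by
    rw [← V.inner_map_map, hVy, inner_add_right, inner_smul_right, h.inner_last u hu,
      zero_add] at hy
    exact hy
  rw [hVy, (mul_eq_zero.1 ha).resolve_right h.inner_last_pow_apply_ne_zero, zero_smul, add_zero]
  exact hu

variable [CompleteSpace E] [CompleteSpace F]

lemma isometry_adjoint_apply : V ((V.toContinuousLinearMap†) b) = b :=
  isometry_adjoint_apply_of_mem_range V (h.pow_apply_mem_range (j := 0) (Nat.zero_le k))

lemma compression_pow_adjoint_apply {j : ℕ} (hj : j ≤ k) :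
    (compression A V ^ j) ((V.toContinuousLinearMap†) b) =
      (V.toContinuousLinearMap†) ((A ^ j) b) := by
  induction j with
  | zero => rfl
  | succ j ih =>
    rw [pow_succ', mul_apply_eq_comp, ih (by omega), pow_succ',
      mul_apply_eq_comp]
    exact congrArg (fun x => (V.toContinuousLinearMap†) (A x))
      (isometry_adjoint_apply_of_mem_range V (h.pow_apply_mem_range (by omega)))

lemma inner_last_compression_pow_adjoint_apply {j : ℕ} (hj : j < k) :
    ⟪q, (compression A V ^ j) ((V.toContinuousLinearMap†) b)⟫_ℂ = 0 := by
  rw [h.compression_pow_adjoint_apply hj.le, ContinuousLinearMap.adjoint_inner_right]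
  exact h.inner_last _ (pow_apply_mem_krylovSpace A b hj)

lemma apply_isometry_apply_of_inner_last_eq_zero {y : F} (hy : ⟪q, y⟫_ℂ = 0) :
    A (V y) = V (compression A V y) := by
  have hmem : A (V y) ∈ LinearMap.range V.toLinearMap :=
    h.range_eq ▸ apply_mem_krylovSpace_succ (h.isometry_apply_mem_krylovSpace hy)
  exact (isometry_adjoint_apply_of_mem_range V hmem).symm

lemma apply_isometry_apply (y : F) :
    A (V y) = V (compression A V y) + ⟪q, y⟫_ℂ • lanczosResidual A V q := by
  have horth : ⟪q, y - ⟪q, y⟫_ℂ • q⟫_ℂ = 0 := by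
    rw [inner_sub_right, inner_smul_right, inner_self_eq_norm_sq_to_K, h.norm_last]
    simp
  have hkrylov := h.apply_isometry_apply_of_inner_last_eq_zero horth
  simp only [map_sub, map_smul] at hkrylov
  rw [lanczosResidual, smul_sub, ← sub_eq_iff_eq_add]
  rw [sub_eq_sub_iff_add_eq_add] at hkrylov
  rw [← sub_eq_zero] at hkrylov ⊢
  rw [← hkrylov]
  abel

lemma adjoint_apply_apply (hA : IsSelfAdjoint A) (x : E) :
    (V.toContinuousLinearMap†) (A x) =
      compression A V ((V.toContinuousLinearMap†) x) + ⟪lanczosResidual A V q, x⟫_ℂ • q := by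
  have hT : (compression A V)† = compression A V := by
    rw [compression, ContinuousLinearMap.adjoint_comp, ContinuousLinearMap.adjoint_comp,
      ContinuousLinearMap.adjoint_adjoint, hA.adjoint_eq, ContinuousLinearMap.comp_assoc]
  refine ext_inner_left ℂ fun y => ?_
  have hVy : ⟪V y, A x⟫_ℂ = ⟪A (V y), x⟫_ℂ := by
    rw [← ContinuousLinearMap.adjoint_inner_left, hA.adjoint_eq]
  rw [ContinuousLinearMap.adjoint_inner_right, V.coe_toContinuousLinearMap, hVy,
    h.apply_isometry_apply, inner_add_left, inner_smul_left, inner_conj_symm, inner_add_right,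
    inner_smul_right, ← ContinuousLinearMap.adjoint_inner_left (compression A V), hT,
    ContinuousLinearMap.adjoint_inner_right, V.coe_toContinuousLinearMap, mul_comm]

end IsLanczosIsometry

end Lanczos

section Resolvent

open scoped InnerProduct InnerProductSpace

variable {E F : Type*} [NormedAddCommGroup E] [InnerProductSpace ℂ E]
  [NormedAddCommGroup F] [InnerProductSpace ℂ F]

lemma le_eigenvalues_of_algebraMap_le [FiniteDimensional ℂ F] {T : F →L[ℂ] F} {c : ℝ}
    (hT : algebraMap ℝ _ c ≤ T) (hsymm : T.toLinearMap.IsSymmetric)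
    (i : Fin (Module.finrank ℂ F)) : c ≤ hsymm.eigenvalues rfl i := by
  set v := hsymm.eigenvectorBasis rfl i
  have hv : T v = (hsymm.eigenvalues rfl i : ℂ) • v := hsymm.apply_eigenvectorBasis rfl i
  have hpos := ((ContinuousLinearMap.le_def _ _).1 hT).re_inner_nonneg_right v
  simpa [hv, Algebra.algebraMap_eq_smul_one, inner_sub_right, inner_smul_right,
    inner_smul_right_eq_smul, v] using hpos

lemma exists_pos_charpoly_eval_neg_eq [FiniteDimensional ℂ F] {T : F →L[ℂ] F} {c t : ℝ}
    (hc : 0 < c) (hT : algebraMap ℝ _ c ≤ T) (ht : 0 ≤ t) :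
    ∃ s : ℝ, 0 < s ∧
      T.toLinearMap.charpoly.eval (-t : ℂ) = (-1) ^ Module.finrank ℂ F * (s : ℂ) := by
  have := FiniteDimensional.complete ℂ F
  have hsymm := (isSelfAdjoint_of_algebraMap_le hT).isSymmetric
  refine ⟨∏ i, (t + hsymm.eigenvalues rfl i), Finset.prod_pos fun i _ => ?_, ?_⟩
  · linarith [le_eigenvalues_of_algebraMap_le hT hsymm i]
  · have hfactor (i) : (-t - hsymm.eigenvalues rfl i : ℂ) = -1 * (t + hsymm.eigenvalues rfl i) := by
      ring
    rw [hsymm.charpoly_eq rfl, Polynomial.eval_prod]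
    simp [hfactor, Finset.prod_mul_distrib, -neg_mul, -one_mul]

section Shift

variable [CompleteSpace E] {A : E →L[ℂ] E} {c t : ℝ} (hc : 0 < c) (hA : algebraMap ℝ _ c ≤ A)
  (ht : 0 ≤ t) (u : E)
include hc hA ht

lemma shiftedInv_apply_add_smul : shiftedInv A t (A u + (t : ℂ) • u) = u := by
  simpa [Algebra.algebraMap_eq_smul_one] using
    DFunLike.congr_fun (shiftedInv_mul_add_algebraMap hc hA ht) u

lemma apply_shiftedInv_add_smul : A (shiftedInv A t u) + (t : ℂ) • shiftedInv A t u = u := by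
  simpa [Algebra.algebraMap_eq_smul_one] using
    DFunLike.congr_fun (add_algebraMap_mul_shiftedInv hc hA ht) u

lemma mul_shiftedInv_apply : (A * shiftedInv A t) u = u - (t : ℂ) • shiftedInv A t u :=
  eq_sub_of_add_eq (apply_shiftedInv_add_smul hc hA ht u)

end Shift

namespace IsLanczosIsometry

variable {A : E →L[ℂ] E} {b : E} {k : ℕ} {V : F →ₗᵢ[ℂ] E} {q : F} {c t : ℝ}
  [CompleteSpace E] [CompleteSpace F]
  (h : IsLanczosIsometry A b k V q) (hc : 0 < c) (hA : algebraMap ℝ _ c ≤ A)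
include h hc hA

lemma exists_inner_last_shiftedInv_eq_smul : ∃ w : ℂ, ∀ t : ℝ, 0 ≤ t → ∃ s : ℝ, 0 ≤ s ∧
    ⟪q, shiftedInv (compression A V) t ((V.toContinuousLinearMap†) b)⟫_ℂ = s • w := by
  have := h.finiteDimensional
  set T := compression A V
  set e := (V.toContinuousLinearMap†) b
  have hT : algebraMap ℝ _ c ≤ T := algebraMap_le_compression hA V
  refine ⟨-((-1) ^ Module.finrank ℂ F *
    (T.toLinearMap.charpoly.coeff (k + 1) * ⟪q, (T ^ k) e⟫_ℂ)), fun t ht => ?_⟩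
  obtain ⟨s, hs, hcharpoly⟩ := exists_pos_charpoly_eval_neg_eq hc hT ht
  refine ⟨s⁻¹, inv_nonneg.2 hs.le, ?_⟩
  have hR : (shiftedInv T t).toLinearMap * (T.toLinearMap + algebraMap ℂ _ (t : ℂ)) = 1 :=
    LinearMap.ext (shiftedInv_apply_add_smul hc hT ht)
  have hres : T.toLinearMap.charpoly.eval (-t : ℂ) * ⟪q, shiftedInv T t e⟫_ℂ =
      -(T.toLinearMap.charpoly.coeff (k + 1) * ⟪q, (T ^ k) e⟫_ℂ) := by
    simpa [Module.End.pow_apply] using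
      eval_neg_mul_apply_resolvent (ℓ := innerₛₗ ℂ q) (e := e) hR
        (fun j hj => by
          simpa [Module.End.pow_apply] using h.inner_last_compression_pow_adjoint_apply hj)
        T.toLinearMap.aeval_self_charpoly (T.toLinearMap.charpoly_natDegree.trans_le h.finrank_le)
  have hs0 : (s : ℂ) ≠ 0 := Complex.ofReal_ne_zero.2 hs.ne'
  have hsign : ((-1) ^ Module.finrank ℂ F * (-1) ^ Module.finrank ℂ F : ℂ) = 1 := by
    rw [← mul_pow, neg_one_mul, neg_neg, one_pow]
  rw [hcharpoly] at hres
  rw [Complex.real_smul, Complex.ofReal_inv, eq_inv_mul_iff_mul_eq₀ hs0]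
  linear_combination (-1) ^ Module.finrank ℂ F * hres - s * ⟪q, shiftedInv T t e⟫_ℂ * hsign

lemma adjoint_shiftedInv_apply (ht : 0 ≤ t) (u : E) :
    (V.toContinuousLinearMap†) (shiftedInv A t u) =
      shiftedInv (compression A V) t ((V.toContinuousLinearMap†) u) -
        ⟪lanczosResidual A V q, shiftedInv A t u⟫_ℂ • shiftedInv (compression A V) t q := by
  set T := compression A V
  set y := shiftedInv A t u
  have hshift : T ((V.toContinuousLinearMap†) y) + (t : ℂ) • (V.toContinuousLinearMap†) y =
      (V.toContinuousLinearMap†) u - ⟪lanczosResidual A V q, y⟫_ℂ • q := by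
    rw [eq_sub_iff_add_eq, add_right_comm,
      ← h.adjoint_apply_apply (isSelfAdjoint_of_algebraMap_le hA), ← map_smul, ← map_add,
      apply_shiftedInv_add_smul hc hA ht]
  rw [← map_smul, ← map_sub, ← hshift,
    shiftedInv_apply_add_smul hc (algebraMap_le_compression hA V) ht]

lemma inner_lanczosResidual_shiftedInv_apply (ht : 0 ≤ t) :
    ⟪lanczosResidual A V q, shiftedInv A t b⟫_ℂ =
      -(⟪q, shiftedInv (compression A V) t ((V.toContinuousLinearMap†) b)⟫_ℂ *
        ⟪lanczosResidual A V q, shiftedInv A t (lanczosResidual A V q)⟫_ℂ) := by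
  set z := shiftedInv (compression A V) t ((V.toContinuousLinearMap†) b)
  have hshift : A (V z) + (t : ℂ) • V z = b + ⟪q, z⟫_ℂ • lanczosResidual A V q := by
    rw [h.apply_isometry_apply, add_right_comm, ← map_smul, ← map_add,
      apply_shiftedInv_add_smul hc (algebraMap_le_compression hA V) ht, h.isometry_adjoint_apply]
  have hVz : V z =
      shiftedInv A t b + ⟪q, z⟫_ℂ • shiftedInv A t (lanczosResidual A V q) := by
    rw [← map_smul, ← map_add, ← hshift, shiftedInv_apply_add_smul hc hA ht]
  rw [eq_neg_iff_add_eq_zero, ← inner_smul_right, ← inner_add_right, ← hVz,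
    inner_lanczosResidual_isometry_apply]

lemma inner_lanczosResidual_mul_shiftedInv_apply (ht : 0 ≤ t) :
    ⟪lanczosResidual A V q, (A * shiftedInv A t) b⟫_ℂ =
      -(t * ⟪lanczosResidual A V q, shiftedInv A t b⟫_ℂ) := by
  have hb : ⟪lanczosResidual A V q, b⟫_ℂ = 0 := by
    rw [← h.isometry_adjoint_apply, inner_lanczosResidual_isometry_apply]
  rw [mul_shiftedInv_apply hc hA ht, inner_sub_right, inner_smul_right, hb, zero_sub]

lemma exists_inner_lanczosResidual_mul_shiftedInv_eq_smul :
    ∃ w : ℂ, ∀ t : ℝ, 0 ≤ t → ∃ s : ℝ, 0 ≤ s ∧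
      ⟪lanczosResidual A V q, (A * shiftedInv A t) b⟫_ℂ = s • w := by
  obtain ⟨w, hw⟩ := h.exists_inner_last_shiftedInv_eq_smul hc hA
  refine ⟨w, fun t ht => ?_⟩
  obtain ⟨s, hs, hsw⟩ := hw t ht
  set r := lanczosResidual A V q
  have hpos : (0 : ℂ) ≤ ⟪r, shiftedInv A t r⟫_ℂ :=
    ((ContinuousLinearMap.nonneg_iff_isPositive _).1
      (shiftedInv_nonneg hc hA ht)).inner_nonneg_right r
  obtain ⟨σ, hσ, hσr⟩ := RCLike.nonneg_iff_exists_ofReal.1 hpos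
  refine ⟨t * s * σ, by positivity, ?_⟩
  rw [h.inner_lanczosResidual_mul_shiftedInv_apply hc hA ht,
    h.inner_lanczosResidual_shiftedInv_apply hc hA ht, hsw, ← hσr]
  simp only [Complex.real_smul, Complex.coe_algebraMap]
  push_cast
  ring

lemma adjoint_mul_shiftedInv_sub (ht : 0 ≤ t) :
    (V.toContinuousLinearMap†) ((A * shiftedInv A t) b) -
      (compression A V * shiftedInv (compression A V) t) ((V.toContinuousLinearMap†) b) =
      -⟪lanczosResidual A V q, (A * shiftedInv A t) b⟫_ℂ • shiftedInv (compression A V) t q := by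
  have hT : algebraMap ℝ _ c ≤ compression A V := algebraMap_le_compression hA V
  rw [h.inner_lanczosResidual_mul_shiftedInv_apply hc hA ht, mul_shiftedInv_apply hc hA ht,
    mul_shiftedInv_apply hc hT ht, map_sub, map_smul, h.adjoint_shiftedInv_apply hc hA ht, neg_neg,
    smul_sub, smul_smul]
  abel

lemma norm_adjoint_mul_shiftedInv_sub_le (ht : 0 ≤ t) :
    ‖(V.toContinuousLinearMap†) ((A * shiftedInv A t) b) -
      (compression A V * shiftedInv (compression A V) t) ((V.toContinuousLinearMap†) b)‖ ≤
      c⁻¹ * ‖⟪lanczosResidual A V q, (A * shiftedInv A t) b⟫_ℂ‖ := by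
  have hT : algebraMap ℝ _ c ≤ compression A V := algebraMap_le_compression hA V
  have hq : ‖shiftedInv (compression A V) t q‖ ≤ c⁻¹ :=
    (ContinuousLinearMap.le_of_opNorm_le _ (norm_shiftedInv_le hc hT ht) q).trans_eq
      (by rw [h.norm_last, mul_one])
  rw [h.adjoint_mul_shiftedInv_sub hc hA ht, norm_smul, norm_neg, mul_comm]
  gcongr

lemma norm_adjoint_cfc_apply_sub_le {g : ℝ → ℝ} (hg : IsStieltjes g) :
    ‖(V.toContinuousLinearMap†) (cfc (fun z => z * g z) A b) -
        cfc (fun z => z * g z) (compression A V) ((V.toContinuousLinearMap†) b)‖ ≤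
      c⁻¹ * ‖⟪lanczosResidual A V q, cfc (fun z => z * g z) A b⟫_ℂ‖ := by
  have hT : algebraMap ℝ _ c ≤ compression A V := algebraMap_le_compression hA V
  obtain ⟨μ, hμ, hgμ⟩ := hg
  obtain ⟨w, hw⟩ := h.exists_inner_lanczosResidual_mul_shiftedInv_eq_smul hc hA
  have hintA := integrableOn_mul_shiftedInv hc hA hμ
  have hintT := integrableOn_mul_shiftedInv hc hT hμ
  have hintAb := hintA.apply_continuousLinearMap b
  have hintTe := hintT.apply_continuousLinearMap ((V.toContinuousLinearMap†) b)
  set r := lanczosResidual A V q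
  rw [cfc_mul_eq_integral_mul_shiftedInv hc hA hμ hgμ,
    cfc_mul_eq_integral_mul_shiftedInv hc hT hμ hgμ, ContinuousLinearMap.integral_apply hintA,
    ContinuousLinearMap.integral_apply hintT, ← ContinuousLinearMap.integral_comp_comm _ hintAb,
    ← integral_sub ((V.toContinuousLinearMap†).integrable_comp hintAb) hintTe]
  calc _ ≤ ∫ t in Set.Ici 0, c⁻¹ * ‖⟪r, (A * shiftedInv A t) b⟫_ℂ‖ ∂μ :=
        norm_integral_le_of_norm_le (((hintAb.const_inner r).norm).const_mul c⁻¹)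
          (ae_restrict_of_forall_mem measurableSet_Ici fun t ht =>
            h.norm_adjoint_mul_shiftedInv_sub_le hc hA ht)
    _ = c⁻¹ * ‖∫ t in Set.Ici 0, ⟪r, (A * shiftedInv A t) b⟫_ℂ ∂μ‖ := by
        rw [integral_const_mul, norm_integral_eq_integral_norm_of_ray
          (ae_restrict_of_forall_mem measurableSet_Ici hw)]
    _ = c⁻¹ * ‖⟪r, ∫ t in Set.Ici 0, (A * shiftedInv A t) b ∂μ⟫_ℂ‖ := by
        rw [integral_inner hintAb r]

end IsLanczosIsometry

theorem lanczos_near_instance_optimality_zStieltjes_beta_general [CompleteSpace E] [CompleteSpace F]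
    {A : E →L[ℂ] E} {c : ℝ} (hc : 0 < c) (hA : algebraMap ℝ _ c ≤ A) {b : E} {k : ℕ}
    {V : F →ₗᵢ[ℂ] E} {q : F} (h : IsLanczosIsometry A b k V q) {g : ℝ → ℝ} (hg : IsStieltjes g)
    {x : E} (hx : x ∈ krylovSpace A b (k + 1)) :
    ‖cfc (fun z => z * g z) A b -
        V (cfc (fun z => z * g z) (compression A V) ((V.toContinuousLinearMap†) b))‖ ≤
      (1 + ‖A (V q) - V (compression A V q)‖ / c) * ‖cfc (fun z => z * g z) A b - x‖ := by
  obtain ⟨y, rfl⟩ := h.range_eq ▸ hx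
  set u := cfc (fun z => z * g z) A b
  set w := cfc (fun z => z * g z) (compression A V) ((V.toContinuousLinearMap†) b)
  set r := lanczosResidual A V q
  have hinner : ‖⟪r, u⟫_ℂ‖ ≤ ‖r‖ * ‖u - V y‖ := by
    rw [← sub_zero ⟪r, u⟫_ℂ, ← inner_lanczosResidual_isometry_apply A V q y, ← inner_sub_right]
    exact norm_inner_le_norm r _
  calc ‖u - V w‖
      ≤ ‖u - V ((V.toContinuousLinearMap†) u)‖ + ‖V ((V.toContinuousLinearMap†) u) - V w‖ :=
        norm_sub_le_norm_sub_add_norm_sub _ _ _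
    _ ≤ ‖u - V y‖ + c⁻¹ * (‖r‖ * ‖u - V y‖) := by
        rw [← map_sub, V.norm_map]
        gcongr
        · exact norm_sub_isometry_adjoint_apply_le V u y
        · exact (h.norm_adjoint_cfc_apply_sub_le hc hA hg).trans (by gcongr)
    _ = (1 + ‖r‖ / c) * ‖u - V y‖ := by ring

end Resolvent

section EuclideanSpace

open scoped InnerProduct InnerProductSpace

variable {n m : Type*} [Fintype n] [DecidableEq n] [Fintype m] [DecidableEq m]

lemma toEuclideanCLM_cfc {A : Matrix n n ℂ} (hA : A.IsHermitian) (f : ℝ → ℝ) :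
    toEuclideanCLM (𝕜 := ℂ) (hA.cfc f) = cfc f (toEuclideanCLM (𝕜 := ℂ) A) := by
  rw [← hA.cfc_eq f]
  have hcont : ContinuousOn f (spectrum ℝ A) := A.finite_real_spectrum.continuousOn f
  exact StarAlgHomClass.map_cfc (S := ℂ) _ f A hcont
    (toEuclideanCLM (𝕜 := ℂ) (n := n)).toAlgEquiv.toLinearMap.continuous_of_finiteDimensional
    hA.isSelfAdjoint (hA.isSelfAdjoint.map _)

lemma algebraMap_le_toEuclideanCLM {A : Matrix n n ℂ} (hA : A.IsHermitian) {c : ℝ}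
    (hc : ∀ i, c ≤ hA.eigenvalues i) : algebraMap ℝ _ c ≤ toEuclideanCLM (𝕜 := ℂ) A := by
  have hsa : IsSelfAdjoint (toEuclideanCLM (𝕜 := ℂ) A) := hA.isSelfAdjoint.map _
  have hspec : spectrum ℝ (toEuclideanCLM (𝕜 := ℂ) A) = Set.range hA.eigenvalues := by
    rw [← hA.spectrum_real_eq_range_eigenvalues]
    exact AlgEquiv.spectrum_eq ((toEuclideanCLM (𝕜 := ℂ) (n := n)).toAlgEquiv.restrictScalars ℝ) A
  rw [algebraMap_le_iff_le_spectrum hsa, hspec]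
  exact Set.forall_mem_range.2 hc

/-- The isometry `x ↦ V x` of Euclidean spaces given by a matrix `V` with orthonormal columns. -/
noncomputable def euclideanIsometry (V : Matrix n m ℂ) (hV : Vᴴ * V = 1) :
    EuclideanSpace ℂ m →ₗᵢ[ℂ] EuclideanSpace ℂ n where
  toLinearMap := toEuclideanLin V
  norm_map' x := by
    have hinner : ⟪toEuclideanLin V x, toEuclideanLin V x⟫_ℂ = ⟪x, x⟫_ℂ := by
      rw [← LinearMap.adjoint_inner_right, ← toEuclideanLin_conjTranspose_eq_adjoint,
        ← LinearMap.comp_apply, ← toLpLin_mul_same, hV, toLpLin_one, LinearMap.id_apply]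
    rw [norm_eq_sqrt_re_inner (𝕜 := ℂ), hinner, ← norm_eq_sqrt_re_inner]

lemma adjoint_euclideanIsometry_apply {V : Matrix n m ℂ} (hV : Vᴴ * V = 1)
    (x : EuclideanSpace ℂ n) :
    ((euclideanIsometry V hV).toContinuousLinearMap†) x = toEuclideanLin Vᴴ x := by
  rw [toEuclideanLin_conjTranspose_eq_adjoint]
  rfl

lemma compression_toEuclideanCLM (A : Matrix n n ℂ) {V : Matrix n m ℂ} (hV : Vᴴ * V = 1) :
    compression (toEuclideanCLM (𝕜 := ℂ) A) (euclideanIsometry V hV) =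
      toEuclideanCLM (𝕜 := ℂ) (Vᴴ * A * V) := by
  ext1 x
  refine (adjoint_euclideanIsometry_apply hV _).trans ?_
  change _ = toEuclideanLin (Vᴴ * A * V) x
  rw [toLpLin_mul_same, toLpLin_mul_same]
  rfl

lemma krylovSpace_toEuclideanCLM {n : ℕ} (A : Matrix (Fin n) (Fin n) ℂ)
    (b : EuclideanSpace ℂ (Fin n)) (m : ℕ) :
    krylovSpace (toEuclideanCLM (𝕜 := ℂ) A) b m = Krylov A b m := by
  have hset : (Set.range fun i : Fin m => (toEuclideanCLM (𝕜 := ℂ) A ^ (i : ℕ)) b) =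
      {v | ∃ i < m, v = toEuclideanLin (A ^ i) b} := by
    ext v
    simp only [← map_pow, Set.mem_range, Fin.exists_iff, exists_prop, Set.mem_ofPred_eq,
      eq_comm (a := v)]
    rfl
  rw [krylovSpace, hset, Krylov]

lemma isLanczosIsometry_euclideanIsometry {n k : ℕ} {A : Matrix (Fin n) (Fin n) ℂ}
    {b : EuclideanSpace ℂ (Fin n)} {V : Matrix (Fin n) (Fin (k + 1)) ℂ} (hV : Vᴴ * V = 1)
    (hspan : ∀ j : ℕ, 1 ≤ j → j ≤ k + 1 →
      Submodule.span ℂ {v | ∃ i : Fin (k + 1), (i : ℕ) < j ∧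
        v = toEuclideanLin V (EuclideanSpace.single i 1)} = Krylov A b j) :
    IsLanczosIsometry (toEuclideanCLM (𝕜 := ℂ) A) b k (euclideanIsometry V hV)
      (EuclideanSpace.single (Fin.last k) 1) where
  range_eq := by
    rw [krylovSpace_toEuclideanCLM, ← hspan (k + 1) (by omega) le_rfl, LinearMap.range_eq_map,
      ← (EuclideanSpace.basisFun (Fin (k + 1)) ℂ).toBasis.span_eq, Submodule.map_span,
      ← Set.range_comp]
    congr 1
    ext v
    simp [eq_comm (a := v), euclideanIsometry, Fin.is_le]
  norm_last := by simp
  inner_last y hy := by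
    suffices krylovSpace (toEuclideanCLM (𝕜 := ℂ) A) b k ≤
        (ℂ ∙ euclideanIsometry V hV (EuclideanSpace.single (Fin.last k) 1))ᗮ from
      Submodule.mem_orthogonal_singleton_iff_inner_right.1 (this hy)
    rcases Nat.eq_zero_or_pos k with rfl | hk
    · simp [krylovSpace]
    rw [krylovSpace_toEuclideanCLM, ← hspan k hk (by omega), Submodule.span_le]
    rintro _ ⟨i, hi, rfl⟩
    refine Submodule.mem_orthogonal_singleton_iff_inner_right.2 <|
      ((euclideanIsometry V hV).inner_map_map _ _).trans ?_
    have hne : Fin.last k ≠ i := fun h => by simp [← h] at hi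
    exact (EuclideanSpace.orthonormal_single (𝕜 := ℂ)).inner_eq_zero hne

end EuclideanSpace

/-- **Near instance optimality of Lanczos for `z` times Stieltjes functions** (Theorem 4.1 with bound (3.1))
(Theorem 3.1, bound (3.1)): for a Lanczos basis `V = [v₁ | … | v_m]` of `K_m(A,b)`
(orthonormal columns, `v₁ = b`, nested Krylov spans) and
`β_{m+1} = ‖A v_m − V (V* A V) e_m‖`, the Lanczos approximation
`f_m = V f(V* A V) V* b` satisfies
`‖f(A)b − f_m‖ ≤ (1 + β_{m+1} λ_max/λ_min²) ‖f(A)b − x‖` for every `x ∈ K_m(A,b)`. -/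
theorem lanczos_near_instance_optimality_zStieltjes_beta
    {n m : ℕ} (hm : 1 ≤ m)
    (A : Matrix (Fin n) (Fin n) ℂ) (hA : A.IsHermitian) (hApd : A.PosDef)
    (lmin lmax : ℝ)
    (hlmin_mem : ∃ i, hA.eigenvalues i = lmin) (hlmin : ∀ i, lmin ≤ hA.eigenvalues i)
    (hlmax_mem : ∃ i, hA.eigenvalues i = lmax) (hlmax : ∀ i, hA.eigenvalues i ≤ lmax)
    (b : EuclideanSpace ℂ (Fin n)) (hb : ‖b‖ = 1)
    (g : ℝ → ℝ) (hg : IsStieltjes g) (f : ℝ → ℝ) (hf : ∀ z : ℝ, f z = z * g z)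
    (V : Matrix (Fin n) (Fin m) ℂ)
    -- the columns of `V` are orthonormal
    (hVorth : Vᴴ * V = 1)
    -- the first column of `V` is `b`
    (hVfirst : Matrix.toEuclideanLin V (EuclideanSpace.single ⟨0, hm⟩ 1) = b)
    -- for every `1 ≤ j ≤ m`, the first `j` columns of `V` span `K_j(A,b)`
    (hVnested : ∀ j : ℕ, 1 ≤ j → j ≤ m →
      Submodule.span ℂ {v | ∃ i : Fin m, (i : ℕ) < j ∧
        v = Matrix.toEuclideanLin V (EuclideanSpace.single i 1)} = Krylov A b j)
    -- `β_{m+1} = ‖A v_m − V (V* A V) e_m‖`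
    (β : ℝ)
    (hβ : β = ‖Matrix.toEuclideanLin A
        (Matrix.toEuclideanLin V (EuclideanSpace.single ⟨m - 1, by omega⟩ 1)) -
      Matrix.toEuclideanLin V
        (Matrix.toEuclideanLin (Vᴴ * A * V) (EuclideanSpace.single ⟨m - 1, by omega⟩ 1))‖)
    (fm : EuclideanSpace ℂ (Fin n))
    (hfm : fm = Matrix.toEuclideanLin V
      (Matrix.toEuclideanLin ((Matrix.isHermitian_conjTranspose_mul_mul V hA).cfc f)
        (Matrix.toEuclideanLin Vᴴ b)))
    (x : EuclideanSpace ℂ (Fin n)) (hx : x ∈ Krylov A b m) :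
    ‖Matrix.toEuclideanLin (hA.cfc f) b - fm‖ ≤
      (1 + β * lmax / lmin ^ 2) * ‖Matrix.toEuclideanLin (hA.cfc f) b - x‖ := by
  obtain ⟨k, rfl⟩ : ∃ k, m = k + 1 := ⟨m - 1, by omega⟩
  obtain rfl : f = fun z => z * g z := funext hf
  have hmin : 0 < lmin := by
    obtain ⟨i, rfl⟩ := hlmin_mem
    exact hApd.eigenvalues_pos i
  have hle : lmin ≤ lmax := by
    obtain ⟨i, rfl⟩ := hlmin_mem
    exact hlmax i
  have hβ0 : 0 ≤ β := hβ ▸ norm_nonneg _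
  have hfactor : β / lmin ≤ β * lmax / lmin ^ 2 := by
    rw [div_le_div_iff₀ hmin (by positivity)]
    nlinarith [mul_le_mul_of_nonneg_left hle (mul_nonneg hβ0 hmin.le)]
  have hgeneral := lanczos_near_instance_optimality_zStieltjes_beta_general hmin
    (algebraMap_le_toEuclideanCLM hA hlmin) (isLanczosIsometry_euclideanIsometry hVorth hVnested)
    hg (krylovSpace_toEuclideanCLM A b (k + 1) ▸ hx)
  rw [compression_toEuclideanCLM, adjoint_euclideanIsometry_apply, ← toEuclideanCLM_cfc hA,
    ← toEuclideanCLM_cfc (isHermitian_conjTranspose_mul_mul V hA)] at hgeneral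
  rw [hfm]
  calc _ ≤ (1 + β / lmin) * _ := hβ ▸ hgeneral
    _ ≤ _ := mul_le_mul_of_nonneg_right (add_le_add_right hfactor 1) (norm_nonneg _)
end

section
/- In the block matrix setup, for every t ≥ 0 it holds that d(t) ≠ 0 and, writing (T + tI)⁻¹ e_1^{(m+k)} = (x(t); z(t)) with x(t) ∈ ℝ^m and z(t) ∈ ℝ^k, one has x(t) − (T₁ + tI)⁻¹ e_1^{(m)} = −(δ(t) ε(t) / d(t)) · (T₁ + tI)⁻¹ e_m^{(m)}. -/
open Matrix

/-!
Eliminating `z` from the block system `(T + tI) (x; z) = (e₁; 0)` leaves the Schur complement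
system `(A - β² δ e_m e_mᵀ) x = e₁`, where `A = T₁ + tI`: a rank-one perturbation of `A`.
Its invertibility forces `1 - β² γ δ = -β² d` to be nonzero by the matrix determinant lemma, and
the Sherman–Morrison formula then solves it for `x`.
-/

section SchurComplement

variable {R p q : Type*} [CommRing R] [Fintype p] [Fintype q] [DecidableEq p] [DecidableEq q]

theorem isUnit_schurComplement_iff {D : Matrix q q R} (hD : IsUnit D) (A : Matrix p p R)
    (B : Matrix p q R) (C : Matrix q p R) :
    IsUnit (A - B * D⁻¹ * C) ↔ IsUnit (fromBlocks A B C D) := by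
  let := hD.invertible
  rw [isUnit_fromBlocks_iff_of_invertible₂₂, invOf_eq_nonsing_inv]

theorem inv_fromBlocks_mulVec_elim_zero_comp_inl {A : Matrix p p R} {B : Matrix p q R}
    {C : Matrix q p R} {D : Matrix q q R} (hD : IsUnit D) (hM : IsUnit (fromBlocks A B C D))
    (w : p → R) :
    ((fromBlocks A B C D)⁻¹ *ᵥ Sum.elim w 0) ∘ Sum.inl = (A - B * D⁻¹ * C)⁻¹ *ᵥ w := by
  have hSchur := (isUnit_schurComplement_iff hD A B C).2 hM
  let := hD.invertible
  let := hM.invertible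
  rw [← invOf_eq_nonsing_inv D] at hSchur ⊢
  let := hSchur.invertible
  rw [← invOf_eq_nonsing_inv, ← invOf_eq_nonsing_inv, invOf_fromBlocks₂₂_eq, fromBlocks_mulVec,
    Sum.elim_comp_inl, Sum.elim_comp_inl, Sum.elim_comp_inr, mulVec_zero, add_zero]

end SchurComplement

section RankOne

variable {p : Type*} [Fintype p] [DecidableEq p]

theorem det_sub_vecMulVec {R : Type*} [CommRing R] {A : Matrix p p R} (hA : IsUnit A)
    (u v : p → R) : (A - vecMulVec u v).det = A.det * (1 - v ⬝ᵥ A⁻¹ *ᵥ u) := by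
  rw [isUnit_iff_isUnit_det] at hA
  rw [sub_eq_add_neg, ← neg_vecMulVec, vecMulVec_eq Unit, det_add_mul _ _ hA,
    det_unique (n := Unit), Matrix.mul_assoc, ← replicateCol_mulVec, mulVec_neg, Matrix.add_apply,
    one_apply_eq, replicateRow_mul_replicateCol_apply, dotProduct_neg, ← sub_eq_add_neg]

theorem isUnit_sub_vecMulVec_iff {R : Type*} [CommRing R] {A : Matrix p p R} (hA : IsUnit A)
    (u v : p → R) : IsUnit (A - vecMulVec u v) ↔ IsUnit (1 - v ⬝ᵥ A⁻¹ *ᵥ u) := by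
  rw [isUnit_iff_isUnit_det, det_sub_vecMulVec hA, IsUnit.mul_iff,
    and_iff_right ((isUnit_iff_isUnit_det A).1 hA)]

theorem inv_sub_vecMulVec_mulVec {K : Type*} [Field K] {A : Matrix p p K} (hA : IsUnit A)
    {u v : p → K} (h : 1 - v ⬝ᵥ A⁻¹ *ᵥ u ≠ 0) (w : p → K) :
    (A - vecMulVec u v)⁻¹ *ᵥ w =
      A⁻¹ *ᵥ w + (v ⬝ᵥ A⁻¹ *ᵥ w / (1 - v ⬝ᵥ A⁻¹ *ᵥ u)) • A⁻¹ *ᵥ u := by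
  have hU : IsUnit (A - vecMulVec u v) := (isUnit_sub_vecMulVec_iff hA u v).2 h.isUnit
  have mulVec_inv_mulVec {B : Matrix p p K} (hB : IsUnit B) (y : p → K) : B *ᵥ B⁻¹ *ᵥ y = y := by
    rw [mulVec_mulVec, mul_nonsing_inv _ ((isUnit_iff_isUnit_det B).1 hB), one_mulVec]
  apply mulVec_injective_of_isUnit hU
  rw [mulVec_inv_mulVec hU, mulVec_add, mulVec_smul, sub_mulVec, sub_mulVec,
    mulVec_inv_mulVec hA, mulVec_inv_mulVec hA, vecMulVec_mulVec, vecMulVec_mulVec]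
  ext i
  simp only [Pi.add_apply, Pi.sub_apply, Pi.smul_apply, op_smul_eq_smul, smul_eq_mul]
  field_simp
  ring

end RankOne

section Single

variable {R p q : Type*} [DecidableEq p] [DecidableEq q]

theorem single_eq_of_ite [Zero R] (a : p) (b : q) (r : R) :
    single a b r = of fun i j => if i = a ∧ j = b then r else 0 := by
  ext i j
  simp only [single_apply, of_apply, eq_comm]

theorem single_eq_vecMulVec [Semiring R] (a : p) (b : q) (r : R) :
    single a b r = vecMulVec (r • Pi.single a 1) (Pi.single b 1) := by
  rw [smul_vecMulVec, ← single_eq_single_vecMulVec_single, smul_single, smul_eq_mul, mul_one]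

theorem isUnit_sub_single_iff [CommRing R] [Fintype p] {A : Matrix p p R} (hA : IsUnit A)
    (a b : p) (r : R) : IsUnit (A - single a b r) ↔ IsUnit (1 - r * A⁻¹ b a) := by
  rw [single_eq_vecMulVec, isUnit_sub_vecMulVec_iff hA, mulVec_smul, single_one_dotProduct,
    mulVec_single_one, Pi.smul_apply, col_apply, smul_eq_mul]

theorem inv_sub_single_mulVec {K : Type*} [Field K] [Fintype p] {A : Matrix p p K}
    (hA : IsUnit A) {a b : p} {r : K} (h : 1 - r * A⁻¹ b a ≠ 0) (w : p → K) :
    (A - single a b r)⁻¹ *ᵥ w =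
      A⁻¹ *ᵥ w + (r * (A⁻¹ *ᵥ w) b / (1 - r * A⁻¹ b a)) • A⁻¹ *ᵥ Pi.single a 1 := by
  have hdot : Pi.single b 1 ⬝ᵥ A⁻¹ *ᵥ (r • Pi.single a 1) = r * A⁻¹ b a := by
    rw [mulVec_smul, single_one_dotProduct, mulVec_single_one, Pi.smul_apply, col_apply,
      smul_eq_mul]
  rw [single_eq_vecMulVec, inv_sub_vecMulVec_mulVec hA (by rwa [hdot]), hdot,
    single_one_dotProduct, mulVec_smul, smul_smul, div_mul_eq_mul_div, mul_comm _ r]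

end Single

section CoupledBlocks

variable {R p q : Type*} [DecidableEq p] [DecidableEq q]

/-- The block matrix `[[A, β e_a e_bᵀ], [β' e_b e_aᵀ, D]]`: two diagonal blocks coupled through a
single entry in each direction. The matrix `T` of the block matrix setup is the case `β' = β`, with
`a` the last index of `A` and `b` the first index of `D`. -/
def coupledBlocks [Zero R] (A : Matrix p p R) (D : Matrix q q R) (a : p) (b : q) (β β' : R) :
    Matrix (p ⊕ q) (p ⊕ q) R :=
  fromBlocks A (single a b β) (single b a β') D

theorem coupledBlocks_add_smul_one [Semiring R] (A : Matrix p p R) (D : Matrix q q R)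
    (a : p) (b : q) (β β' t : R) :
    coupledBlocks A D a b β β' + t • (1 : Matrix (p ⊕ q) (p ⊕ q) R) =
      coupledBlocks (A + t • (1 : Matrix p p R)) (D + t • (1 : Matrix q q R)) a b β β' := by
  simp only [coupledBlocks, ← fromBlocks_one, fromBlocks_smul, fromBlocks_add, smul_zero, add_zero]

theorem isUnit_of_posDef_coupledBlocks [Fintype p] [Fintype q] [Field R] [PartialOrder R]
    [StarRing R] {A : Matrix p p R} {D : Matrix q q R} {a : p} {b : q} {β β' : R}
    (h : (coupledBlocks A D a b β β').PosDef) : IsUnit A ∧ IsUnit D :=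
  ⟨(h.submatrix Sum.inl_injective).isUnit, (h.submatrix Sum.inr_injective).isUnit⟩

theorem isUnit_coupledBlocks_iff [CommRing R] [Fintype p] [Fintype q] {A : Matrix p p R}
    {D : Matrix q q R} (hA : IsUnit A) (hD : IsUnit D) (a : p) (b : q) (β β' : R) :
    IsUnit (coupledBlocks A D a b β β') ↔ IsUnit (1 - β * D⁻¹ b b * β' * A⁻¹ a a) := by
  rw [coupledBlocks, ← isUnit_schurComplement_iff hD, single_mul_mul_single,
    isUnit_sub_single_iff hA]

theorem inv_coupledBlocks_mulVec_comp_inl {K : Type*} [Field K] [Fintype p] [Fintype q]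
    {A : Matrix p p K} {D : Matrix q q K} {a : p} {b : q} {β β' : K} (hA : IsUnit A)
    (hD : IsUnit D) (hM : IsUnit (coupledBlocks A D a b β β')) (w : p → K) :
    ((coupledBlocks A D a b β β')⁻¹ *ᵥ Sum.elim w 0) ∘ Sum.inl =
      A⁻¹ *ᵥ w + (β * D⁻¹ b b * β' * (A⁻¹ *ᵥ w) a / (1 - β * D⁻¹ b b * β' * A⁻¹ a a)) •
        A⁻¹ *ᵥ Pi.single a 1 := by
  have hne := ((isUnit_coupledBlocks_iff hA hD a b β β').1 hM).ne_zero
  rw [coupledBlocks, inv_fromBlocks_mulVec_elim_zero_comp_inl hD hM, single_mul_mul_single,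
    inv_sub_single_mulVec hA hne]

end CoupledBlocks

theorem woodbury_top_block_general {K p q : Type*} [Field K] [Fintype p] [Fintype q]
    [DecidableEq p] [DecidableEq q] {A : Matrix p p K} {D : Matrix q q K} {a : p} {b : q}
    {β β' : K} (hβ : β ≠ 0) (hβ' : β' ≠ 0) (hA : IsUnit A) (hD : IsUnit D)
    (hM : IsUnit (coupledBlocks A D a b β β')) (w : p → K) :
    A⁻¹ a a * D⁻¹ b b - 1 / (β * β') ≠ 0 ∧
      ((coupledBlocks A D a b β β')⁻¹ *ᵥ Sum.elim w 0) ∘ Sum.inl - A⁻¹ *ᵥ w =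
        (-(D⁻¹ b b * (A⁻¹ *ᵥ w) a / (A⁻¹ a a * D⁻¹ b b - 1 / (β * β')))) •
          A⁻¹ *ᵥ Pi.single a 1 := by
  have hd : 1 - β * D⁻¹ b b * β' * A⁻¹ a a =
      -(β * β') * (A⁻¹ a a * D⁻¹ b b - 1 / (β * β')) := by
    field_simp
    ring
  have hne := ((isUnit_coupledBlocks_iff hA hD a b β β').1 hM).ne_zero
  rw [hd] at hne
  refine ⟨right_ne_zero_of_mul hne, ?_⟩
  rw [inv_coupledBlocks_mulVec_comp_inl hA hD hM, add_sub_cancel_left, hd]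
  congr 1
  rw [neg_mul, div_neg, mul_right_comm β, mul_assoc (β * β'),
    mul_div_mul_left _ _ (mul_ne_zero hβ hβ')]

/-- **Lemma 3.3, formula (3.13)**: in the block matrix setup
`T = [[T₁, β e_m e₁ᵀ], [β e₁ e_mᵀ, S]]` with `T` positive definite, for every `t ≥ 0` the
determinant `d(t) = γ(t)δ(t) − 1/β²` of the Woodbury capacitance matrix is nonzero and,
writing `(T + tI)⁻¹ e₁ = (x(t); z(t))`, one has
`x(t) − (T₁ + tI)⁻¹ e₁ = −(δ(t) ε(t) / d(t)) (T₁ + tI)⁻¹ e_m`. -/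
theorem woodbury_top_block
    {m k : ℕ} (hm : 1 ≤ m) (hk : 1 ≤ k)
    (T₁ : Matrix (Fin m) (Fin m) ℝ) (S : Matrix (Fin k) (Fin k) ℝ)
    (hT₁ : T₁.IsSymm) (hS : S.IsSymm)
    (β : ℝ) (hβ : 0 < β)
    (T : Matrix (Fin m ⊕ Fin k) (Fin m ⊕ Fin k) ℝ)
    (hT : T = Matrix.fromBlocks T₁
      (Matrix.of fun i j => if i = (⟨m - 1, by omega⟩ : Fin m) ∧ j = (⟨0, hk⟩ : Fin k) then β else 0)
      (Matrix.of fun i j => if i = (⟨0, hk⟩ : Fin k) ∧ j = (⟨m - 1, by omega⟩ : Fin m) then β else 0)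
      S)
    (hTpd : T.PosDef)
    (γ δ ε d : ℝ → ℝ)
    (hγ : ∀ t, γ t = (T₁ + t • 1)⁻¹ ⟨m - 1, by omega⟩ ⟨m - 1, by omega⟩)
    (hδ : ∀ t, δ t = (S + t • 1)⁻¹ ⟨0, hk⟩ ⟨0, hk⟩)
    (hε : ∀ t, ε t = (T₁ + t • 1)⁻¹ ⟨m - 1, by omega⟩ ⟨0, hm⟩)
    (hd : ∀ t, d t = γ t * δ t - 1 / β ^ 2)
    (t : ℝ) (ht : 0 ≤ t)
    (x : Fin m → ℝ)
    (hx : ∀ i, x i = (T + t • 1)⁻¹.mulVec (Pi.single (Sum.inl ⟨0, hm⟩) 1) (Sum.inl i)) :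
    d t ≠ 0 ∧
      x - (T₁ + t • 1)⁻¹.mulVec (Pi.single ⟨0, hm⟩ 1) =
        (-(δ t * ε t / d t)) • (T₁ + t • 1)⁻¹.mulVec (Pi.single ⟨m - 1, by omega⟩ 1) := by
  have hshift : T + t • 1 =
      coupledBlocks (T₁ + t • 1) (S + t • 1) ⟨m - 1, by omega⟩ ⟨0, hk⟩ β β := by
    rw [hT, ← single_eq_of_ite, ← single_eq_of_ite, ← coupledBlocks_add_smul_one, coupledBlocks]
  have hpd : (T + t • 1).PosDef := hTpd.add_posSemidef (PosSemidef.one.smul ht)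
  have hx' : x = ((T + t • 1)⁻¹ *ᵥ Sum.elim (Pi.single ⟨0, hm⟩ 1) 0) ∘ Sum.inl := by
    rw [Sum.elim_single_zero]
    exact funext hx
  rw [hshift] at hpd hx'
  obtain ⟨hA, hD⟩ := isUnit_of_posDef_coupledBlocks hpd
  rw [hx', hd, hγ, hδ, hε, sq]
  simpa only [mulVec_single_one, col_apply] using
    woodbury_top_block_general hβ.ne' hβ.ne' hA hD hpd.isUnit (Pi.single ⟨0, hm⟩ 1)
end
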